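/- arXiv:2308.15403 — 2 statements merged into one kernel-verified Lean document; each statement's English description precedes it below -/
import Mathlib

section
/- There is an absolute constant c > 0 such that the following holds. Let q ≥ 2 be an even integer, let n ≥ 2, and let C : {-1,1}^k → {-1,1}^n be a (q, δ, ε)-normally decodable code. Then k ≤ c · n^{1 - 2/q} · (log n) / (ε^2 · δ^2). -/
open Finset
open scoped Classical

noncomputable section

/-- The map sending a Boolean to the corresponding element of `{-1, 1} ⊆ ℝ`. -/
def pmo (b : Bool) : ℝ := if b then 1 else -1

/-- `H` is a `q`-uniform hypergraph matching on `[n]`. -/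
def IsMatching {n : ℕ} (q : ℕ) (H : Finset (Finset (Fin n))) : Prop :=
  (∀ C ∈ H, C.card = q) ∧ Set.Pairwise (H : Set (Finset (Fin n))) Disjoint

/-- A code is `(q, δ, ε)`-normally decodable. -/
def NormallyDecodable (q k n : ℕ) (δ ε : ℝ)
    (Enc : (Fin k → Bool) → Fin n → Bool) : Prop :=
  ∃ H : Fin k → Finset (Finset (Fin n)),
    (∀ i, IsMatching q (H i)) ∧
    (∀ i, δ * n ≤ ((H i).card : ℝ)) ∧
    (∀ i, ∀ C ∈ H i,
      (1 / 2 + ε : ℝ) ≤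
        ((Finset.univ.filter (fun b : Fin k → Bool =>
          pmo (b i) = ∏ v ∈ C, pmo (Enc b v))).card : ℝ) / 2 ^ k)


theorem pmo_sq (b : Bool) : pmo b ^ 2 = 1 := by
  cases b <;> simp [pmo]

/-- Powers of a weighted sum of nonnegative matrices with bounded row sums expand over words, each
word carrying a nonnegative matrix with bounded row sums. -/
theorem exists_word_expansion {ι Ω : Type*} [Fintype ι] [Fintype Ω]
    (M : ι → Matrix Ω Ω ℝ) (t : ℝ) (h0 : ∀ i S T, 0 ≤ M i S T)
    (hrow : ∀ i S, ∑ T, M i S T ≤ t) (ht : 0 ≤ t) (m : ℕ) :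
    ∃ P : (Fin m → ι) → Matrix Ω Ω ℝ, (∀ w S T, 0 ≤ P w S T) ∧
      (∀ w S, ∑ T, P w S T ≤ t ^ m) ∧
      ∀ x : ι → ℝ, (∑ i, x i • M i) ^ m = ∑ w, (∏ j, x (w j)) • P w := by
  induction m with
  | zero =>
    refine ⟨fun _ => 1, fun w S T => ?_, fun w S => ?_, fun x => ?_⟩
    · simp only [Matrix.one_apply]; split_ifs <;> norm_num
    · simp [Matrix.one_apply]
    · simp
  | succ m ih =>
    obtain ⟨P, hP0, hProw, hP⟩ := ih
    refine ⟨fun w => M (w 0) * P (Fin.tail w), fun w S T => ?_, fun w S => ?_, fun x => ?_⟩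
    · simp only [Matrix.mul_apply]
      exact sum_nonneg fun U _ => mul_nonneg (h0 _ _ _) (hP0 _ _ _)
    · simp only [Matrix.mul_apply]
      rw [sum_comm]
      calc ∑ U, ∑ T, M (w 0) S U * P (Fin.tail w) U T
          = ∑ U, M (w 0) S U * ∑ T, P (Fin.tail w) U T := by simp only [mul_sum]
        _ ≤ ∑ U, M (w 0) S U * t ^ m :=
            sum_le_sum fun U _ => mul_le_mul_of_nonneg_left (hProw _ _) (h0 _ _ _)
        _ = (∑ U, M (w 0) S U) * t ^ m := by rw [sum_mul]
        _ ≤ t * t ^ m := mul_le_mul_of_nonneg_right (hrow _ _) (pow_nonneg ht m)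
        _ = t ^ (m + 1) := by ring
    · rw [pow_succ', hP, sum_mul, ← (Fin.consEquiv fun _ : Fin (m + 1) => ι).sum_comp,
        Fintype.sum_prod_type]
      refine sum_congr rfl fun i _ => ?_
      rw [mul_sum]
      refine sum_congr rfl fun w _ => ?_
      simp [Fin.consEquiv, Fin.prod_univ_succ, Fin.tail_cons, smul_smul, mul_comm]

theorem sum_prod_pmo_nonneg {k m : ℕ} (w : Fin m → Fin k) :
    0 ≤ ∑ b : Fin k → Bool, ∏ j, pmo (b (w j)) := by
  have h : ∀ b : Fin k → Bool,
      ∏ j, pmo (b (w j)) = ∏ i, pmo (b i) ^ (univ.filter fun j => w j = i).card := by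
    intro b
    rw [← prod_fiberwise univ w]
    refine prod_congr rfl fun i _ => ?_
    rw [← prod_const]
    refine prod_congr rfl fun j hj => ?_
    rw [(mem_filter.1 hj).2]
  simp only [h]
  have h2 := prod_univ_sum (fun _ : Fin k => (univ : Finset Bool))
    (fun i c => pmo c ^ (univ.filter fun j => w j = i).card)
  rw [Fintype.piFinset_univ] at h2
  rw [← h2]
  refine prod_nonneg fun i _ => ?_
  simp only [Fintype.sum_bool, pmo, if_true, one_pow, Bool.false_eq_true, if_false]
  rcases neg_one_pow_eq_or ℝ (univ.filter fun j => w j = i).card with h | h <;> rw [h] <;> norm_num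

theorem sum_trace_pow_le {k : ℕ} {Ω : Type*} [Fintype Ω]
    (M : Fin k → Matrix Ω Ω ℝ) (t : ℝ) (h0 : ∀ i S T, 0 ≤ M i S T)
    (hrow : ∀ i S, ∑ T, M i S T ≤ t) (ht : 0 ≤ t) (m : ℕ) :
    ∑ b : Fin k → Bool, ((∑ i, pmo (b i) • M i) ^ m).trace ≤
      Fintype.card Ω * t ^ m * ∑ b : Fin k → Bool, (∑ i, pmo (b i)) ^ m := by
  obtain ⟨P, hP0, hProw, hP⟩ := exists_word_expansion M t h0 hrow ht m
  have htr : ∀ w, (P w).trace ≤ Fintype.card Ω * t ^ m := by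
    intro w
    calc (P w).trace = ∑ S, P w S S := rfl
      _ ≤ ∑ _S : Ω, t ^ m := sum_le_sum fun S _ =>
          (single_le_sum (f := fun T => P w S T) (fun T _ => hP0 w S T) (mem_univ S)).trans
            (hProw w S)
      _ = _ := by simp
  simp only [hP _, Fintype.sum_pow, Matrix.trace_sum, Matrix.trace_smul, smul_eq_mul]
  rw [sum_comm, sum_comm (f := fun (b : Fin k → Bool) (w : Fin m → Fin k) => ∏ j, pmo (b (w j))),
    mul_sum]
  refine sum_le_sum fun w _ => ?_
  rw [← sum_mul, mul_comm]
  exact mul_le_mul_of_nonneg_right (htr w) (sum_prod_pmo_nonneg w)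

theorem sum_exp_rademacher_le (k : ℕ) (lam : ℝ) :
    ∑ b : Fin k → Bool, Real.exp (lam * ∑ i, pmo (b i)) ≤
      2 ^ k * Real.exp (k * lam ^ 2 / 2) := by
  have h2 := prod_univ_sum (fun _ : Fin k => (univ : Finset Bool))
    (fun _ c => Real.exp (lam * pmo c))
  rw [Fintype.piFinset_univ] at h2
  simp only [mul_sum, Real.exp_sum]
  rw [← h2]
  simp only [Fintype.sum_bool, pmo, if_true, Bool.false_eq_true, if_false, mul_one, prod_const,
    card_univ, Fintype.card_fin]
  have h3 : Real.exp lam + Real.exp (lam * -1) = 2 * Real.cosh lam := by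
    rw [Real.cosh_eq]; ring_nf
  rw [h3, mul_pow]
  refine mul_le_mul_of_nonneg_left ?_ (by positivity)
  calc Real.cosh lam ^ k ≤ Real.exp (lam ^ 2 / 2) ^ k :=
        pow_le_pow_left₀ (Real.cosh_pos _).le (Real.cosh_le_exp_half_sq lam) k
    _ = _ := by rw [← Real.exp_nat_mul]; ring_nf

theorem sum_pow_rademacher_le (k m : ℕ) (hm : Even m) (lam : ℝ) (hl : 0 < lam) :
    ∑ b : Fin k → Bool, (∑ i, pmo (b i)) ^ m ≤
      2 * (m / lam) ^ m * (2 ^ k * Real.exp (k * lam ^ 2 / 2)) := by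
  have key : ∀ x : ℝ, x ^ m ≤ (m / lam) ^ m * (Real.exp (lam * x) + Real.exp ((-lam) * x)) := by
    intro x
    have h1 := Real.pow_div_factorial_le_exp (lam * |x|) (by positivity) m
    have h2 : Real.exp (lam * |x|) ≤ Real.exp (lam * x) + Real.exp ((-lam) * x) := by
      rcases abs_cases x with ⟨h, _⟩ | ⟨h, _⟩ <;> rw [h]
      · linarith [Real.exp_pos (-lam * x)]
      · have : lam * -x = -lam * x := by ring
        rw [this]; linarith [Real.exp_pos (lam * x)]
    have hf : (m.factorial : ℝ) ≤ (m : ℝ) ^ m := by exact_mod_cast Nat.factorial_le_pow m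
    rw [div_le_iff₀ (by positivity), mul_pow, hm.pow_abs] at h1
    rw [div_pow, div_mul_eq_mul_div, le_div_iff₀ (by positivity), mul_comm]
    refine h1.trans ?_
    rw [mul_comm]
    exact mul_le_mul hf h2 (Real.exp_pos _).le (by positivity)
  calc ∑ b : Fin k → Bool, (∑ i, pmo (b i)) ^ m
      ≤ ∑ b : Fin k → Bool, (m / lam) ^ m * (Real.exp (lam * ∑ i, pmo (b i)) +
          Real.exp ((-lam) * ∑ i, pmo (b i))) := sum_le_sum fun b _ => key _
    _ = (m / lam) ^ m * (∑ b : Fin k → Bool, Real.exp (lam * ∑ i, pmo (b i)) +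
          ∑ b : Fin k → Bool, Real.exp ((-lam) * ∑ i, pmo (b i))) := by
        rw [← mul_sum, sum_add_distrib]
    _ ≤ (m / lam) ^ m * (2 ^ k * Real.exp (k * lam ^ 2 / 2) +
          2 ^ k * Real.exp (k * (-lam) ^ 2 / 2)) := by
        gcongr
        · exact sum_exp_rademacher_le k lam
        · exact sum_exp_rademacher_le k (-lam)
    _ = _ := by rw [neg_sq]; ring

open Matrix in
theorem sq_dotProduct_mulVec_le {Ω : Type*} [Fintype Ω] (A : Matrix Ω Ω ℝ) (hA : Aᵀ = A)
    (z : Ω → ℝ) : (z ⬝ᵥ A *ᵥ z) ^ 2 ≤ (z ⬝ᵥ z) * (z ⬝ᵥ (A ^ 2) *ᵥ z) := by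
  have h := sum_mul_sq_le_sq_mul_sq univ z (A *ᵥ z)
  have h2 : z ⬝ᵥ (A ^ 2) *ᵥ z = (A *ᵥ z) ⬝ᵥ (A *ᵥ z) := by
    rw [pow_two, ← mulVec_mulVec, dotProduct_mulVec, ← mulVec_transpose, hA]
  rw [h2]
  simpa only [dotProduct, pow_two] using h

open Matrix in
theorem pow_two_pow_dotProduct_mulVec_le {Ω : Type*} [Fintype Ω] (N : ℝ) (hN : 0 < N)
    (z : Ω → ℝ) (hz : z ⬝ᵥ z = N) (j : ℕ) (A : Matrix Ω Ω ℝ) (hA : Aᵀ = A) :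
    ((z ⬝ᵥ A *ᵥ z) / N) ^ 2 ^ (j + 1) ≤ (A ^ 2 ^ (j + 1)).trace := by
  induction j generalizing A with
  | zero =>
    have h := sq_dotProduct_mulVec_le A hA z
    have h2 : z ⬝ᵥ (A ^ 2) *ᵥ z ≤ N * (A ^ 2).trace := by
      have e : z ⬝ᵥ (A ^ 2) *ᵥ z = ∑ S, (A *ᵥ z) S ^ 2 := by
        rw [pow_two, ← mulVec_mulVec, dotProduct_mulVec, ← mulVec_transpose, hA]
        simp only [dotProduct, pow_two]
      have e2 : (A ^ 2).trace = ∑ S, ∑ T, A S T ^ 2 := by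
        conv_lhs => rw [pow_two]; enter [1, 2]; rw [← hA]
        simp only [Matrix.trace, Matrix.diag, Matrix.mul_apply, Matrix.transpose_apply, pow_two]
      rw [e, e2, mul_sum]
      refine sum_le_sum fun S _ => ?_
      have h3 := sum_mul_sq_le_sq_mul_sq univ (A S) z
      have h4 : ∑ T, z T ^ 2 = N := by rw [← hz]; simp only [dotProduct, pow_two]
      rw [h4, mul_comm] at h3
      exact h3
    rw [hz] at h
    rw [zero_add, pow_one, div_pow, div_le_iff₀ (by positivity)]
    calc _ ≤ _ := h
      _ ≤ N * (N * (A ^ 2).trace) := by gcongr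
      _ = _ := by ring
  | succ j ih =>
    have h := sq_dotProduct_mulVec_le A hA z
    rw [hz] at h
    have h1 := ih (A ^ 2) (by rw [transpose_pow, hA])
    rw [← pow_mul, ← pow_succ'] at h1
    refine le_trans ?_ h1
    rw [pow_succ' 2 (j + 1), pow_mul]
    refine pow_le_pow_left₀ (sq_nonneg _) ?_ _
    rw [div_pow, div_le_div_iff₀ (by positivity) hN]
    nlinarith

open Matrix in
/-- Weak matrix-Khintchine bound on the number of signs correlated with quadratic forms. -/
theorem correlated_signs_le {k : ℕ} {Ω : Type*} [Fintype Ω] [Nonempty Ω]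
    (M : Fin k → Matrix Ω Ω ℝ) (t ε γ L : ℝ) (h0 : ∀ i S T, 0 ≤ M i S T)
    (hrow : ∀ i S, ∑ T, M i S T ≤ t) (hsymm : ∀ i, (M i)ᵀ = M i) (ht : 0 < t) (hε : 0 < ε)
    (hγ : 0 < γ) (hL : 1 ≤ L) (hcard : Real.log (Fintype.card Ω) ≤ L)
    (hmass : ∀ i, γ * Fintype.card Ω ≤ ∑ S, ∑ T, M i S T)
    (z : (Fin k → Bool) → Ω → ℝ) (hz : ∀ b S, z b S ^ 2 = 1)
    (hcorr : ∀ i S T, 0 < M i S T →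
      2 * ε * 2 ^ k ≤ ∑ b : Fin k → Bool, pmo (b i) * (z b S * z b T)) :
    (k : ℝ) ≤ 400 * t ^ 2 * L / (ε ^ 2 * γ ^ 2) := by
  rcases Nat.eq_zero_or_pos k with rfl | hk
  · simp; positivity
  have hk' : (0 : ℝ) < k := by exact_mod_cast hk
  set N : ℝ := (Fintype.card Ω : ℝ) with hNdef
  have hN : 0 < N := by rw [hNdef]; exact_mod_cast Fintype.card_pos
  obtain ⟨j, hj1, hj2⟩ := exists_nat_pow_near hL (one_lt_two)
  obtain ⟨m, hm⟩ : ∃ m, m = 2 ^ (j + 1) := ⟨_, rfl⟩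
  have hmL : L ≤ m := by rw [hm]; push_cast; exact hj2.le
  have hmL2 : (m : ℝ) ≤ 2 * L := by rw [hm]; push_cast; rw [pow_succ]; linarith
  have hmev : Even m := by rw [hm, pow_succ]; exact even_two.mul_left _
  have hm0 : m ≠ 0 := by rw [hm]; positivity
  have hmpos : (0 : ℝ) < m := by linarith
  set A : (Fin k → Bool) → Matrix Ω Ω ℝ := fun b => ∑ i, pmo (b i) • M i with hA
  have hAs : ∀ b, (A b)ᵀ = A b := by
    intro b; simp only [hA, transpose_sum, transpose_smul, hsymm]
  have hzz : ∀ b, z b ⬝ᵥ z b = N := by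
    intro b
    simp only [dotProduct, ← pow_two, hz]
    simp [hNdef]
  set X : (Fin k → Bool) → ℝ := fun b => (z b ⬝ᵥ A b *ᵥ z b) / N with hX
  have hmean : 2 * ε * γ * k ≤ ∑ b, (1 / 2 ^ k : ℝ) * X b := by
    have e1 : ∑ b, X b * N = ∑ i, ∑ S, ∑ T, M i S T *
        ∑ b : Fin k → Bool, pmo (b i) * (z b S * z b T) := by
      have e2 : ∀ b, X b * N = ∑ i, ∑ S, ∑ T, M i S T * (pmo (b i) * (z b S * z b T)) := by
        intro b
        simp only [hX, hA]
        rw [div_mul_cancel₀ _ hN.ne', sum_mulVec, dotProduct_sum]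
        refine sum_congr rfl fun i _ => ?_
        simp only [dotProduct, mulVec, Matrix.smul_apply, smul_eq_mul, mul_sum]
        refine sum_congr rfl fun S _ => sum_congr rfl fun T _ => by ring
      simp only [e2, mul_sum]
      rw [sum_comm]
      refine sum_congr rfl fun i _ => ?_
      rw [sum_comm]
      refine sum_congr rfl fun S _ => ?_
      rw [sum_comm]
    have e3 : ∑ i : Fin k, 2 * ε * 2 ^ k * (γ * N) ≤ ∑ b, X b * N := by
      rw [e1]
      refine sum_le_sum fun i _ => ?_
      calc 2 * ε * 2 ^ k * (γ * N) ≤ 2 * ε * 2 ^ k * ∑ S, ∑ T, M i S T :=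
            mul_le_mul_of_nonneg_left (hmass i) (by positivity)
        _ = ∑ S, ∑ T, M i S T * (2 * ε * 2 ^ k) := by
            simp only [mul_sum]
            exact sum_congr rfl fun S _ => sum_congr rfl fun T _ => by ring
        _ ≤ _ := by
            refine sum_le_sum fun S _ => sum_le_sum fun T _ => ?_
            rcases (h0 i S T).eq_or_lt with h | h
            · simp [← h]
            · exact mul_le_mul_of_nonneg_left (hcorr i S T h) h.le
    rw [sum_const, card_univ, Fintype.card_fin, nsmul_eq_mul, ← sum_mul] at e3
    have e4 : k * (2 * ε * 2 ^ k * γ) ≤ ∑ b, X b := by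
      refine le_of_mul_le_mul_right ?_ hN
      linarith
    rw [← mul_sum, one_div, ← div_eq_inv_mul, le_div_iff₀ (by positivity)]
    linarith
  have hpow : (2 * ε * γ * k) ^ m ≤ ∑ b, (1 / 2 ^ k : ℝ) * X b ^ m :=
    (pow_le_pow_left₀ (by positivity) hmean m).trans
      (Real.pow_arith_mean_le_arith_mean_pow_of_even univ (fun _ => (1 / 2 ^ k : ℝ)) X
        (fun _ _ => by positivity) (by simp) hmev)
  have htrace : ∑ b, X b ^ m ≤ ∑ b, (A b ^ m).trace := by
    refine sum_le_sum fun b _ => ?_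
    rw [hm]
    exact pow_two_pow_dotProduct_mulVec_le N hN (z b) (hzz b) j (A b) (hAs b)
  set lam : ℝ := Real.sqrt (m / k) with hlam
  have hlpos : 0 < lam := Real.sqrt_pos.2 (by positivity)
  have hl2 : lam ^ 2 = m / k := Real.sq_sqrt (by positivity)
  have hbound := htrace.trans ((sum_trace_pow_le M t h0 hrow ht.le m).trans
    (mul_le_mul_of_nonneg_left (sum_pow_rademacher_le k m hmev lam hlpos)
      (by positivity)))
  have hfin : (2 * ε * γ * k) ^ m ≤ (2 * Real.exp 1 * Real.exp (1 / 2) * (t * (m / lam))) ^ m := by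
    have hNexp : N ≤ Real.exp 1 ^ m := by
      rw [← Real.exp_nat_mul, mul_one]
      exact (Real.log_le_iff_le_exp hN).1 (hcard.trans hmL)
    have h2m : (2 : ℝ) ≤ 2 ^ m := by
      calc (2 : ℝ) = 2 ^ 1 := (pow_one _).symm
        _ ≤ 2 ^ m := pow_le_pow_right₀ (by norm_num) (Nat.pos_of_ne_zero hm0)
    have hexp : Real.exp (k * lam ^ 2 / 2) = Real.exp (1 / 2) ^ m := by
      rw [← Real.exp_nat_mul, hl2]; congr 1; field_simp
    rw [← mul_sum] at hpow
    refine hpow.trans ?_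
    rw [one_div, ← div_eq_inv_mul, div_le_iff₀ (by positivity)]
    refine hbound.trans ?_
    rw [hexp]
    calc N * t ^ m * (2 * (m / lam) ^ m * (2 ^ k * Real.exp (1 / 2) ^ m))
        ≤ Real.exp 1 ^ m * t ^ m * (2 ^ m * (m / lam) ^ m * (2 ^ k * Real.exp (1 / 2) ^ m)) := by
          gcongr
      _ = _ := by simp only [mul_pow]; ring
  have hroot := le_of_pow_le_pow_left₀ hm0 (by positivity) hfin
  have hsq := pow_le_pow_left₀ (by positivity) hroot 2
  have hnum : (2 * Real.exp 1 * Real.exp (1 / 2)) ^ 2 ≤ 100 := by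
    have : Real.exp (1 / 2) ^ 2 = Real.exp 1 := by rw [← Real.exp_nat_mul]; norm_num
    rw [mul_pow, mul_pow, this]
    have h1 := Real.exp_one_lt_d9
    have h2 := Real.exp_pos 1
    have h3 : Real.exp 1 ^ 2 ≤ 2.72 ^ 2 := pow_le_pow_left₀ h2.le (by linarith) 2
    nlinarith
  have hsq2 : (t * (m / lam)) ^ 2 = t ^ 2 * (m * k) := by
    rw [mul_pow, div_pow, hl2]; field_simp
  rw [mul_pow _ (t * (m / lam)), hsq2] at hsq
  rw [le_div_iff₀ (by positivity)]
  have h5 : (2 * ε * γ * k) ^ 2 ≤ 100 * (t ^ 2 * (2 * L * k)) := by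
    refine hsq.trans ?_
    gcongr
  refine le_of_mul_le_mul_right ?_ hk'
  nlinarith [show 0 ≤ t ^ 2 * L * k by positivity]

theorem prod_pmo_sq {α : Type*} (s : Finset α) (f : α → Bool) : (∏ v ∈ s, pmo (f v)) ^ 2 = 1 := by
  rw [← prod_pow]; exact prod_eq_one fun v _ => pmo_sq _

theorem prod_pmo_mul_prod_pmo {α : Type*} [DecidableEq α] (S T : Finset α) (f : α → Bool) :
    (∏ v ∈ S, pmo (f v)) * ∏ v ∈ T, pmo (f v) = ∏ v ∈ symmDiff S T, pmo (f v) := by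
  have hS : ∏ v ∈ S, pmo (f v) = (∏ v ∈ S \ T, pmo (f v)) * ∏ v ∈ S ∩ T, pmo (f v) := by
    rw [mul_comm, prod_inter_mul_prod_sdiff]
  have hT : ∏ v ∈ T, pmo (f v) = (∏ v ∈ T \ S, pmo (f v)) * ∏ v ∈ S ∩ T, pmo (f v) := by
    rw [inter_comm, mul_comm, prod_inter_mul_prod_sdiff]
  have hU : ∏ v ∈ symmDiff S T, pmo (f v) =
      (∏ v ∈ S \ T, pmo (f v)) * ∏ v ∈ T \ S, pmo (f v) := by
    rw [symmDiff_def, sup_eq_union, prod_union disjoint_sdiff_sdiff]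
  rw [hS, hT, hU]
  linear_combination (∏ v ∈ S \ T, pmo (f v)) * (∏ v ∈ T \ S, pmo (f v)) *
    prod_pmo_sq (S ∩ T) f

theorem correlation_of_agreement {k : ℕ} (f g : (Fin k → Bool) → ℝ) (ε : ℝ)
    (hf : ∀ b, f b ^ 2 = 1) (hg : ∀ b, g b ^ 2 = 1)
    (h : (1 / 2 + ε : ℝ) ≤ ((univ.filter fun b => f b = g b).card : ℝ) / 2 ^ k) :
    2 * ε * 2 ^ k ≤ ∑ b, f b * g b := by
  have e : ∀ b, f b * g b = 2 * (if f b = g b then 1 else 0) - 1 := by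
    intro b
    rcases mul_self_eq_one_iff.1 ((pow_two _).symm.trans (hf b)) with h1 | h1 <;>
    rcases mul_self_eq_one_iff.1 ((pow_two _).symm.trans (hg b)) with h2 | h2 <;>
    rw [h1, h2] <;> norm_num
  rw [le_div_iff₀ (by positivity)] at h
  simp only [e, sum_sub_distrib, ← mul_sum, sum_boole]
  simp only [sum_const, card_univ, Fintype.card_fun, Fintype.card_bool, Fintype.card_fin,
    nsmul_eq_mul, Nat.cast_pow, Nat.cast_ofNat, mul_one]
  linarith

/-- Discarding the rows and columns of row sum above `t` loses at most half the mass, provided the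
second moment of the row sums is small. -/
theorem mass_truncation {Ω : Type*} [Fintype Ω] (M : Matrix Ω Ω ℝ) (d : Ω → ℝ) (t : ℝ)
    (ht : 0 < t) (h0 : ∀ S T, 0 ≤ M S T) (hsymm : ∀ S T, M S T = M T S)
    (hd : ∀ S, ∑ T, M S T = d S) (hsq : ∑ S, d S ^ 2 ≤ t / 4 * ∑ S, d S) :
    (∑ S, d S) / 2 ≤ ∑ S, ∑ T, if d S ≤ t ∧ d T ≤ t then M S T else 0 := by
  have hd0 : ∀ S, 0 ≤ d S := fun S => by rw [← hd]; exact sum_nonneg fun T _ => h0 S T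
  have key : ∀ S T, M S T - M S T * (d S / t) - M T S * (d T / t) ≤
      if d S ≤ t ∧ d T ≤ t then M S T else 0 := by
    intro S T
    rw [← hsymm S T]
    have hM := h0 S T
    have a1 : 0 ≤ d S / t := div_nonneg (hd0 S) ht.le
    have a2 : 0 ≤ d T / t := div_nonneg (hd0 T) ht.le
    split_ifs with h
    · nlinarith [mul_nonneg hM a1, mul_nonneg hM a2]
    · rw [not_and_or, not_le, not_le, ← one_lt_div ht, ← one_lt_div ht] at h
      rcases h with h | h
      · nlinarith [mul_nonneg hM a2]
      · nlinarith [mul_nonneg hM a1]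
  have e1 : ∑ S, ∑ T, M S T * (d S / t) = (∑ S, d S ^ 2) / t := by
    simp only [← sum_mul, hd, sum_div]
    exact sum_congr rfl fun S _ => by ring
  calc (∑ S, d S) / 2 ≤ ∑ S, d S - 2 * ((∑ S, d S ^ 2) / t) := by
        have : (∑ S, d S ^ 2) / t ≤ (∑ S, d S) / 4 := by
          rw [div_le_iff₀ ht]; linarith
        linarith
    _ = ∑ S, ∑ T, (M S T - M S T * (d S / t) - M T S * (d T / t)) := by
        simp only [sum_sub_distrib]
        rw [sum_comm (f := fun S T => M T S * (d T / t)), e1]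
        simp only [hd]; ring
    _ ≤ _ := sum_le_sum fun S _ => sum_le_sum fun T _ => key S T

theorem card_filter_inter_card_eq {α : Type*} [Fintype α] [DecidableEq α] (C : Finset α)
    (l m : ℕ) (hml : m ≤ l) :
    ((powersetCard l univ).filter fun S : Finset α => (S ∩ C).card = m).card =
      C.card.choose m * (Fintype.card α - C.card).choose (l - m) := by
  rw [← card_powersetCard, ← card_compl, ← card_powersetCard, ← card_product]
  refine card_bij' (fun S _ => (S ∩ C, S \ C)) (fun P _ => P.1 ∪ P.2) ?_ ?_ ?_ ?_
  · intro S hS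
    simp only [mem_filter, mem_powersetCard, subset_univ, true_and] at hS
    simp only [mem_product, mem_powersetCard]
    refine ⟨⟨inter_subset_right, hS.2⟩, fun x hx => by simpa using (mem_sdiff.1 hx).2, ?_⟩
    have := card_inter_add_card_sdiff S C
    omega
  · rintro ⟨P, Q⟩ h
    simp only [mem_product, mem_powersetCard] at h
    obtain ⟨⟨hP, hPc⟩, hQ, hQc⟩ := h
    have hdisj : Disjoint C Q := disjoint_left.2 fun x hx hxQ => by
      have := hQ hxQ; simp at this; exact this hx
    simp only [mem_filter, mem_powersetCard, subset_univ, true_and]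
    rw [card_union_of_disjoint (hdisj.mono_left hP), union_inter_distrib_right,
      inter_eq_left.2 hP, inter_comm Q, disjoint_iff_inter_eq_empty.1 hdisj, union_empty]
    omega
  · intro S _
    simp only
    ext x; simp only [mem_union, mem_inter, mem_sdiff]; tauto
  · rintro ⟨P, Q⟩ h
    simp only [mem_product, mem_powersetCard] at h
    obtain ⟨⟨hP, hPc⟩, hQ, hQc⟩ := h
    have hQ' : ∀ x ∈ Q, x ∉ C := fun x hx => by simpa using hQ hx
    simp only [Prod.mk.injEq]
    constructor
    · ext x; simp only [mem_union, mem_inter]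
      exact ⟨fun h => h.1.elim id fun hq => (hQ' x hq h.2).elim, fun h => ⟨Or.inl h, hP h⟩⟩
    · ext x; simp only [mem_union, mem_sdiff]
      exact ⟨fun h => h.1.elim (fun hp => (h.2 (hP hp)).elim) id, fun h => ⟨Or.inr h, hQ' x h⟩⟩

theorem card_filter_inter_card_eq_and_le {α : Type*} [Fintype α] [DecidableEq α] (C C' : Finset α)
    (hdisj : Disjoint C C') (l m : ℕ) :
    ((powersetCard l univ).filter fun S : Finset α =>
        (S ∩ C).card = m ∧ (S ∩ C').card = m).card ≤
      C.card.choose m * (C'.card.choose m *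
        (Fintype.card α - (C.card + C'.card)).choose (l - 2 * m)) := by
  rw [← card_union_of_disjoint hdisj, ← card_compl, ← card_powersetCard, ← card_powersetCard,
    ← card_powersetCard (l - 2 * m), ← card_product, ← card_product]
  refine card_le_card_of_injOn (fun S => (S ∩ C, S ∩ C', S \ (C ∪ C'))) ?_ ?_
  · intro S hS
    simp only [coe_filter, Set.mem_ofPred_eq, mem_powersetCard, subset_univ, true_and] at hS
    simp only [coe_product, Set.mem_prod, mem_coe, mem_powersetCard]
    refine ⟨⟨inter_subset_right, hS.2.1⟩, ⟨inter_subset_right, hS.2.2⟩,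
      fun x hx => by simpa using (mem_sdiff.1 hx).2, ?_⟩
    have h1 := card_inter_add_card_sdiff S (C ∪ C')
    rw [inter_union_distrib_left, card_union_of_disjoint
      (hdisj.mono inter_subset_right inter_subset_right)] at h1
    omega
  · intro S _ T _ h
    simp only [Prod.mk.injEq] at h
    obtain ⟨h1, h2, h3⟩ := h
    ext x
    have h1 := Finset.ext_iff.1 h1 x
    have h2 := Finset.ext_iff.1 h2 x
    have h3 := Finset.ext_iff.1 h3 x
    simp only [mem_inter, mem_sdiff, mem_union] at h1 h2 h3
    tauto

theorem choose_mul_descFactorial_mul_descFactorial (n l m : ℕ) (hml : m ≤ l) (hln : l + m ≤ n) :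
    n.choose l * (l.descFactorial m * (n - l).descFactorial m) =
      n.descFactorial (2 * m) * (n - 2 * m).choose (l - m) := by
  have h1 := Nat.choose_mul_factorial_mul_factorial (show l ≤ n by omega)
  have h2 := Nat.choose_mul_factorial_mul_factorial (show l - m ≤ n - 2 * m by omega)
  have h3 := Nat.factorial_mul_descFactorial hml
  have h4 := Nat.factorial_mul_descFactorial (show m ≤ n - l by omega)
  have h5 := Nat.factorial_mul_descFactorial (show 2 * m ≤ n by omega)
  rw [show n - 2 * m - (l - m) = n - l - m by omega] at h2
  refine Nat.eq_of_mul_eq_mul_right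
    (Nat.mul_pos (l - m).factorial_pos (n - l - m).factorial_pos) ?_
  calc _ = n.choose l * ((l - m).factorial * l.descFactorial m) *
        ((n - l - m).factorial * (n - l).descFactorial m) := by ring
    _ = ((n - 2 * m).choose (l - m) * (l - m).factorial * (n - l - m).factorial) *
        n.descFactorial (2 * m) := by rw [h3, h4, h1, h2, h5]
    _ = _ := by ring

theorem pow_le_centralBinom_mul_descFactorial (l m : ℕ) (hml : m ≤ l) :
    l ^ m ≤ (2 * m).choose m * l.descFactorial m := by
  rcases Nat.eq_zero_or_pos m with rfl | hm
  · simp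
  have h1 : l ^ m * m.factorial ≤ l.descFactorial m * m ^ m := by
    rw [← Nat.descFactorial_self m, Nat.descFactorial_eq_prod_range,
      Nat.descFactorial_eq_prod_range, ← card_range m, ← prod_const, ← prod_const, card_range,
      ← prod_mul_distrib, ← prod_mul_distrib]
    refine prod_le_prod' fun i hi => ?_
    rw [mem_range] at hi
    rw [Nat.mul_sub, Nat.sub_mul]
    have : i * m ≤ l * i := by rw [mul_comm l]; exact Nat.mul_le_mul_left i hml
    omega
  have h2 : m ^ m ≤ (2 * m).choose m * m.factorial := by
    have h3 := Nat.choose_mul_factorial_mul_factorial (show m ≤ 2 * m by omega)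
    rw [show 2 * m - m = m by omega] at h3
    have h4 := Nat.factorial_mul_pow_le_factorial (m := m) (n := m)
    rw [← two_mul, ← h3, mul_comm] at h4
    exact (Nat.pow_le_pow_left (Nat.le_succ m) m).trans
      (Nat.le_of_mul_le_mul_right h4 m.factorial_pos)
  refine Nat.le_of_mul_le_mul_right (c := m.factorial * m ^ m) ?_
    (Nat.mul_pos m.factorial_pos (pow_pos hm m))
  calc l ^ m * (m.factorial * m ^ m) = (l ^ m * m.factorial) * m ^ m := by ring
    _ ≤ (l.descFactorial m * m ^ m) * ((2 * m).choose m * m.factorial) := Nat.mul_le_mul h1 h2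
    _ = _ := by ring

/-- Half-intersecting two disjoint edges is at most twice as likely as under independence. -/
theorem pair_count_le (n l m : ℕ) (hml : m ≤ l) (hln : l + 2 * m ≤ n) (hn : 16 * m ^ 2 ≤ n)
    (hm : 1 ≤ m) (h2ml : 2 * m ≤ l) :
    (n - 4 * m).choose (l - 2 * m) * n.choose l ≤ 2 * (n - 2 * m).choose (l - m) ^ 2 := by
  have h1 := choose_mul_descFactorial_mul_descFactorial n l m hml (by omega)
  have h2 := choose_mul_descFactorial_mul_descFactorial (n - 2 * m) (l - m) m (by omega) (by omega)
  rw [show n - 2 * m - 2 * m = n - 4 * m by omega, show l - m - m = l - 2 * m by omega,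
    show n - 2 * m - (l - m) = n - l - m by omega] at h2
  have h3 : n.descFactorial (2 * m) ≤ 2 * (n - 2 * m).descFactorial (2 * m) := by
    have a1 := Nat.descFactorial_le_pow n (2 * m)
    have a2 := Nat.pow_sub_le_descFactorial (n - 2 * m) (2 * m)
    have hm4 : 4 * m ≤ n := by nlinarith
    have a3 : (n - 4 * m) ^ (2 * m) ≤ (n - 2 * m).descFactorial (2 * m) :=
      (Nat.pow_le_pow_left (by omega) _).trans a2
    have a4 : n ^ (2 * m) ≤ 2 * (n - 4 * m) ^ (2 * m) := by
      have hn0 : (0 : ℝ) < n := by exact_mod_cast (show 0 < n by omega)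
      have hnR : (16 : ℝ) * m ^ 2 ≤ n := by exact_mod_cast hn
      have hmR : (1 : ℝ) ≤ m := by exact_mod_cast hm
      have hx : 4 * (m : ℝ) / n ≤ 1 := by
        rw [div_le_one hn0]; exact_mod_cast hm4
      have hb := one_add_mul_le_pow (R := ℝ) (a := -(4 * m / n)) (by linarith) (2 * m)
      have hb2 : (1 : ℝ) / 2 ≤ 1 + ((2 * m : ℕ) : ℝ) * -(4 * m / n) := by
        push_cast
        have : 2 * (m : ℝ) * (4 * m / n) ≤ 1 / 2 := by
          rw [← mul_div_assoc, div_le_iff₀ hn0]; nlinarith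
        linarith
      have hb3 : (1 : ℝ) + -(4 * m / n) = (n - 4 * m) / n := by field_simp; ring
      rw [hb3, div_pow] at hb
      have hb4 := hb2.trans hb
      rw [le_div_iff₀ (by positivity)] at hb4
      have : (n : ℝ) ^ (2 * m) ≤ 2 * ((n : ℝ) - 4 * m) ^ (2 * m) := by linarith
      have hc : ((n - 4 * m : ℕ) : ℝ) = (n : ℝ) - 4 * m := by rw [Nat.cast_sub hm4]; push_cast; ring
      rw [← hc] at this
      exact_mod_cast this
    omega
  have h4 : (l - m).descFactorial m ≤ l.descFactorial m := Nat.descFactorial_le m (by omega)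
  have h5 : (n - l - m).descFactorial m ≤ (n - l).descFactorial m :=
    Nat.descFactorial_le m (by omega)
  set f0 := n.choose l
  set f1 := (n - 2 * m).choose (l - m)
  set f2 := (n - 4 * m).choose (l - 2 * m)
  have hpos : 0 < (n - 2 * m).descFactorial (2 * m) :=
    Nat.descFactorial_pos.2 (by nlinarith [Nat.sub_add_cancel (show 2 * m ≤ n by omega)])
  have hpos2 : 0 < l.descFactorial m * (n - l).descFactorial m :=
    Nat.mul_pos (Nat.descFactorial_pos.2 hml) (Nat.descFactorial_pos.2 (by omega))
  refine Nat.le_of_mul_le_mul_right (c := (n - 2 * m).descFactorial (2 * m) *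
    (l.descFactorial m * (n - l).descFactorial m)) ?_ (Nat.mul_pos hpos hpos2)
  calc f2 * f0 * ((n - 2 * m).descFactorial (2 * m) *
        (l.descFactorial m * (n - l).descFactorial m))
      = ((n - 2 * m).descFactorial (2 * m) * f2) *
        (f0 * (l.descFactorial m * (n - l).descFactorial m)) := by ring
    _ = (f1 * ((l - m).descFactorial m * (n - l - m).descFactorial m)) *
        (n.descFactorial (2 * m) * f1) := by rw [← h2, h1]
    _ ≤ (f1 * (l.descFactorial m * (n - l).descFactorial m)) *
        (2 * (n - 2 * m).descFactorial (2 * m) * f1) := by gcongr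
    _ = _ := by ring

/-- The expected number of edges of a perfect fractional family half-intersecting a random set of
size `l ≈ n ^ (1 - 1 / m)` is bounded below. -/
theorem single_count_ge (n l m : ℕ) (y : ℝ) (hm : 1 ≤ m) (hml : m ≤ l) (hy : 0 < y)
    (hyn : y ^ m = n) (hl : n / y ≤ l) (hln : 2 * m * (l + m) ≤ n) :
    (n.choose l : ℝ) ≤ 2 * (n * ((2 * m).choose m * (n - 2 * m).choose (l - m))) := by
  have hlm : l + m ≤ n := by nlinarith
  have hn0 : (0 : ℝ) < n := by rw [← hyn]; positivity
  have h1 := choose_mul_descFactorial_mul_descFactorial n l m hml hlm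
  have h2 := pow_le_centralBinom_mul_descFactorial l m hml
  have h3 : (n : ℝ) ^ m ≤ 2 * ((n - l).descFactorial m : ℕ) := by
    have a1 := Nat.pow_sub_le_descFactorial (n - l) m
    have a2 : (n - (l + m)) ^ m ≤ (n - l).descFactorial m :=
      (Nat.pow_le_pow_left (by omega) _).trans a1
    have a3 : ((n : ℝ) - (l + m)) ^ m ≤ ((n - l).descFactorial m : ℕ) := by
      have hc : ((n - (l + m) : ℕ) : ℝ) = (n : ℝ) - (l + m) := by
        rw [Nat.cast_sub hlm]; push_cast; ring
      rw [← hc]; exact_mod_cast a2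
    have hx : ((l : ℝ) + m) / n ≤ 1 := by
      rw [div_le_one hn0]; exact_mod_cast hlm
    have hb := one_add_mul_le_pow (R := ℝ) (a := -((l + m) / n)) (by linarith) m
    have hb2 : (m : ℝ) * ((l + m) / n) ≤ 1 / 2 := by
      rw [← mul_div_assoc, div_le_iff₀ hn0]
      have : (2 : ℝ) * m * (l + m) ≤ n := by exact_mod_cast hln
      linarith
    have hb3 : (1 : ℝ) + -((l + m) / n) = (n - (l + m)) / n := by field_simp; ring
    rw [hb3, div_pow] at hb
    have hb4 : (1 : ℝ) / 2 ≤ _ := le_trans (by linarith) hb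
    rw [le_div_iff₀ (by positivity)] at hb4
    linarith
  have h4 : (n : ℝ) ^ m ≤ n * (l : ℝ) ^ m := by
    have := pow_le_pow_left₀ (by positivity) hl m
    rw [div_pow, hyn, div_le_iff₀ hn0] at this
    linarith
  have h2' : (l : ℝ) ^ m ≤ (2 * m).choose m * (l.descFactorial m : ℕ) := by exact_mod_cast h2
  have h5 : ((n.descFactorial (2 * m) : ℕ) : ℝ) ≤ (n : ℝ) ^ m * (n : ℝ) ^ m := by
    rw [← pow_add, ← two_mul]; exact_mod_cast Nat.descFactorial_le_pow n (2 * m)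
  have h1' : (n.choose l : ℝ) * ((l.descFactorial m : ℕ) * ((n - l).descFactorial m : ℕ)) =
      (n.descFactorial (2 * m) : ℕ) * (n - 2 * m).choose (l - m) := by exact_mod_cast h1
  have hpos1 : (0 : ℝ) < (l.descFactorial m : ℕ) := by exact_mod_cast Nat.descFactorial_pos.2 hml
  have hpos2 : (0 : ℝ) < ((n - l).descFactorial m : ℕ) := by
    exact_mod_cast Nat.descFactorial_pos.2 (by omega)
  refine le_of_mul_le_mul_right ?_ (mul_pos hpos1 hpos2)
  rw [h1']
  calc ((n.descFactorial (2 * m) : ℕ) : ℝ) * (n - 2 * m).choose (l - m)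
      ≤ ((n * ((2 * m).choose m * (l.descFactorial m : ℕ))) * (2 * ((n - l).descFactorial m : ℕ))) *
        (n - 2 * m).choose (l - m) := by
        gcongr
        refine h5.trans (mul_le_mul (h4.trans ?_) h3 (by positivity) (by positivity))
        gcongr
    _ = _ := by ring

theorem bound_of_one_edge (k n : ℕ) (ε : ℝ) (hε : 0 < ε) (hn : 1 ≤ n)
    (Enc : (Fin k → Bool) → Fin n → Bool) (C : Fin k → Finset (Fin n))
    (hC : ∀ i, (1 / 2 + ε : ℝ) ≤ ((univ.filter (fun b : Fin k → Bool =>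
      pmo (b i) = ∏ v ∈ C i, pmo (Enc b v))).card : ℝ) / 2 ^ k) :
    (k : ℝ) ≤ 400 * n / ε ^ 2 := by
  have hsum : ∀ i (S : Finset (Fin n)),
      ∑ T, (if symmDiff S T = C i then (1 : ℝ) else 0) = 1 := by
    intro i S
    have : ∀ T, symmDiff S T = C i ↔ T = symmDiff S (C i) := by
      intro T
      constructor
      · rintro h; rw [← h, symmDiff_symmDiff_cancel_left]
      · rintro rfl; rw [symmDiff_symmDiff_cancel_left]
    simp [this]
  have h := correlated_signs_le (k := k) (Ω := Finset (Fin n))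
    (fun i => Matrix.of fun S T => if symmDiff S T = C i then 1 else 0) 1 ε 1 n
    (fun i S T => by simp only [Matrix.of_apply]; split_ifs <;> norm_num)
    (fun i S => by simp only [Matrix.of_apply]; exact (hsum i S).le)
    (fun i => by ext S T; simp only [Matrix.transpose_apply, Matrix.of_apply, symmDiff_comm])
    one_pos hε one_pos (by exact_mod_cast hn)
    (by
      simp only [Fintype.card_finset, Fintype.card_fin, Nat.cast_pow, Nat.cast_ofNat, Real.log_pow]
      have := Real.log_two_lt_d9
      have h0 : (0 : ℝ) ≤ n := Nat.cast_nonneg n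
      nlinarith)
    (fun i => by simp only [Matrix.of_apply, hsum]; simp)
    (fun b S => ∏ v ∈ S, pmo (Enc b v)) (fun b S => prod_pmo_sq _ _)
    (fun i S T hST => by
      simp only [Matrix.of_apply] at hST
      have hST' : symmDiff S T = C i := by
        by_contra hne; simp [hne] at hST
      simp only [prod_pmo_mul_prod_pmo, hST']
      exact correlation_of_agreement (fun b => pmo (b i)) _ ε (fun b => pmo_sq _)
        (fun b => prod_pmo_sq _ _) (hC i))
  simpa using h

theorem card_inter_of_symmDiff {α : Type*} [DecidableEq α] (S T C : Finset α)
    (hc : S.card = T.card) (h : symmDiff S T = C) (m : ℕ) (hC : C.card = 2 * m) : (S ∩ C).card = m := by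
  subst h
  have e : S ∩ symmDiff S T = S \ T := by
    ext x; simp only [mem_inter, mem_symmDiff, mem_sdiff]; tauto
  rw [e]
  rw [symmDiff_def, sup_eq_union, card_union_of_disjoint disjoint_sdiff_sdiff] at hC
  have := card_sdiff_add_card_inter S T
  have h2 := card_sdiff_add_card_inter T S
  rw [inter_comm] at h2
  omega

theorem card_symmDiff_of_card_inter {α : Type*} [DecidableEq α] (S C : Finset α) (m : ℕ)
    (hC : C.card = 2 * m) (h : (S ∩ C).card = m) : (symmDiff S C).card = S.card := by
  rw [symmDiff_def, sup_eq_union, card_union_of_disjoint disjoint_sdiff_sdiff]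
  have := card_sdiff_add_card_inter S C
  have h2 := card_sdiff_add_card_inter C S
  rw [inter_comm] at h2
  omega

/-- The row sums of the level-`l` Kikuchi graph of a family of edges of size `2 * m`. -/
theorem kikuchi_row_sum {n : ℕ} (H : Finset (Finset (Fin n))) (l m : ℕ)
    (hH : ∀ C ∈ H, C.card = 2 * m) (S : {S : Finset (Fin n) // S.card = l}) :
    ∑ T : {S : Finset (Fin n) // S.card = l}, (if symmDiff S.1 T.1 ∈ H then (1 : ℝ) else 0) =
      ∑ C ∈ H, if (S.1 ∩ C).card = m then (1 : ℝ) else 0 := by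
  rw [sum_boole, sum_boole, Nat.cast_inj]
  refine card_bij' (fun T _ => symmDiff S.1 T.1)
    (fun C hC => ⟨symmDiff S.1 C, ?_⟩) ?_ ?_ ?_ ?_
  · rw [mem_filter] at hC
    rw [card_symmDiff_of_card_inter S.1 C m (hH C hC.1) hC.2, S.2]
  · intro T hT
    rw [mem_filter] at hT ⊢
    exact ⟨hT.2, card_inter_of_symmDiff S.1 T.1 _ (S.2.trans T.2.symm) rfl m (hH _ hT.2)⟩
  · intro C hC
    rw [mem_filter] at hC ⊢
    simpa using hC.1
  · intro T _
    simp
  · intro C _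
    simp

theorem sum_subtype_card_boole {n : ℕ} (l : ℕ) (p : Finset (Fin n) → Prop) [DecidablePred p] :
    ∑ S : {S : Finset (Fin n) // S.card = l}, (if p S.1 then (1 : ℝ) else 0) =
      (((powersetCard l univ).filter p).card : ℝ) := by
  rw [← sum_boole]
  exact (sum_subtype (powersetCard l univ) (fun S => by simp [mem_powersetCard])
    (fun S => if p S then (1 : ℝ) else 0)).symm

theorem card_mul_le_of_isMatching {n q : ℕ} (H : Finset (Finset (Fin n))) (hH : IsMatching q H) :
    H.card * q ≤ n := by
  have h := card_biUnion (s := H) (t := id) (fun a ha b hb hab => hH.2 ha hb hab)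
  have h2 : (H.biUnion id).card ≤ n := by simpa using card_le_univ (H.biUnion id)
  rw [h] at h2
  simp only [id] at h2
  rwa [sum_congr rfl hH.1, sum_const, smul_eq_mul] at h2

/-- First and second moments of the degrees in the Kikuchi graph. -/
theorem kikuchi_moments {n : ℕ} (H : Finset (Finset (Fin n))) (l m : ℕ)
    (hH : IsMatching (2 * m) H) (hm : 1 ≤ m) (hml : m ≤ l) (hln : l + 2 * m ≤ n)
    (hn : 16 * m ^ 2 ≤ n) (D : ℝ)
    (hD : D = ((2 * m).choose m : ℝ) * (n - 2 * m).choose (l - m))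
    (d : {S : Finset (Fin n) // S.card = l} → ℝ)
    (hd : ∀ S, d S = ∑ C ∈ H, if (S.1 ∩ C).card = m then (1 : ℝ) else 0) :
    ∑ S, d S = H.card * D ∧
      ∑ S, d S ^ 2 ≤ H.card * D + H.card ^ 2 * (2 * D ^ 2 / n.choose l) := by
  have hN : (0 : ℝ) < n.choose l := by exact_mod_cast Nat.choose_pos (by omega)
  have hone : ∀ C ∈ H, ∑ S : {S : Finset (Fin n) // S.card = l},
      (if (S.1 ∩ C).card = m then (1 : ℝ) else 0) = D := by
    intro C hC
    rw [sum_subtype_card_boole l fun S => (S ∩ C).card = m, card_filter_inter_card_eq C l m hml,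
      hH.1 C hC, hD, Fintype.card_fin]
    push_cast; ring
  have htwo : ∀ C ∈ H, ∀ C' ∈ H, C ≠ C' → ∑ S : {S : Finset (Fin n) // S.card = l},
      (if (S.1 ∩ C).card = m ∧ (S.1 ∩ C').card = m then (1 : ℝ) else 0) ≤
        2 * D ^ 2 / n.choose l := by
    intro C hC C' hC' hne
    have hdisj : Disjoint C C' := hH.2 hC hC' hne
    rw [sum_subtype_card_boole l fun S => (S ∩ C).card = m ∧ (S ∩ C').card = m]
    by_cases h2 : 2 * m ≤ l
    · have h := card_filter_inter_card_eq_and_le C C' hdisj l m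
      rw [hH.1 C hC, hH.1 C' hC', Fintype.card_fin, show 2 * m + 2 * m = 4 * m by ring] at h
      have h3 := pair_count_le n l m hml hln hn hm h2
      rw [le_div_iff₀ hN]
      have h' : (((powersetCard l univ).filter fun S : Finset (Fin n) =>
          (S ∩ C).card = m ∧ (S ∩ C').card = m).card : ℝ) ≤
          (2 * m).choose m * ((2 * m).choose m * (n - 4 * m).choose (l - 2 * m)) := by
        exact_mod_cast h
      have h3' : ((n - 4 * m).choose (l - 2 * m) : ℝ) * n.choose l ≤
          2 * ((n - 2 * m).choose (l - m) : ℝ) ^ 2 := by exact_mod_cast h3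
      calc _ ≤ ((2 * m).choose m * ((2 * m).choose m * (n - 4 * m).choose (l - 2 * m)) : ℝ) *
            n.choose l := by gcongr
        _ = ((2 * m).choose m : ℝ) ^ 2 * ((n - 4 * m).choose (l - 2 * m) * n.choose l) := by ring
        _ ≤ ((2 * m).choose m : ℝ) ^ 2 * (2 * ((n - 2 * m).choose (l - m) : ℝ) ^ 2) := by gcongr
        _ = 2 * D ^ 2 := by rw [hD]; ring
    · rw [filter_eq_empty_iff.2]
      · simp only [card_empty, Nat.cast_zero]; positivity
      · intro S hS hcon
        have h1 : (S ∩ C ∪ S ∩ C').card ≤ S.card :=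
          card_le_card (union_subset inter_subset_left inter_subset_left)
        rw [card_union_of_disjoint (hdisj.mono inter_subset_right inter_subset_right),
          (mem_powersetCard.1 hS).2] at h1
        omega
  refine ⟨?_, ?_⟩
  · simp only [hd]
    rw [sum_comm, sum_congr rfl hone, sum_const, nsmul_eq_mul]
  · have hE : 0 ≤ 2 * D ^ 2 / (n.choose l : ℝ) := by positivity
    have e : ∀ S, d S ^ 2 = ∑ C ∈ H, ∑ C' ∈ H,
        if (S.1 ∩ C).card = m ∧ (S.1 ∩ C').card = m then (1 : ℝ) else 0 := by
      intro S
      rw [hd, pow_two, sum_mul_sum]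
      refine sum_congr rfl fun C _ => sum_congr rfl fun C' _ => ?_
      by_cases h1 : (S.1 ∩ C).card = m <;> by_cases h2 : (S.1 ∩ C').card = m <;> simp [h1, h2]
    simp only [e]
    rw [sum_comm]
    calc _ ≤ ∑ C ∈ H, ∑ C' ∈ H, ((if C = C' then D else 0) + 2 * D ^ 2 / (n.choose l : ℝ)) := by
          refine sum_le_sum fun C hC => ?_
          rw [sum_comm]
          refine sum_le_sum fun C' hC' => ?_
          by_cases hCC : C = C'
          · subst hCC
            simp only [and_self, if_true]
            rw [hone C hC]; linarith
          · rw [if_neg hCC, zero_add]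
            exact htwo C hC C' hC' hCC
      _ = _ := by
          simp only [sum_add_distrib, sum_ite_eq, sum_const, nsmul_eq_mul]
          rw [sum_congr rfl fun C hC => if_pos hC, sum_const, nsmul_eq_mul]
          ring

/-- The Kikuchi bound at a level `l` where the counts behave as for independent edges. -/
theorem kikuchi_bound (k n l m : ℕ) (δ ε : ℝ) (Enc : (Fin k → Bool) → Fin n → Bool)
    (H : Fin k → Finset (Finset (Fin n))) (hδ : 0 < δ) (hε : 0 < ε) (hm : 1 ≤ m) (hml : m ≤ l)
    (hln : l + 2 * m ≤ n) (hn : 16 * m ^ 2 ≤ n)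
    (hcount : (n.choose l : ℝ) ≤ 2 * (n * ((2 * m).choose m * (n - 2 * m).choose (l - m))))
    (hH : ∀ i, IsMatching (2 * m) (H i)) (hsize : ∀ i, δ * n ≤ ((H i).card : ℝ))
    (hdec : ∀ i, ∀ C ∈ H i, (1 / 2 + ε : ℝ) ≤ ((univ.filter (fun b : Fin k → Bool =>
      pmo (b i) = ∏ v ∈ C, pmo (Enc b v))).card : ℝ) / 2 ^ k) :
    (k : ℝ) ≤ 230400 * (l * Real.log n) / (ε ^ 2 * δ ^ 2) := by
  set D : ℝ := ((2 * m).choose m : ℝ) * (n - 2 * m).choose (l - m) with hD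
  set N : ℝ := (n.choose l : ℝ) with hN
  have hNpos : 0 < N := by rw [hN]; exact_mod_cast Nat.choose_pos (by omega)
  have hn16 : 16 ≤ n := by nlinarith
  have hnpos : (0 : ℝ) < n := by exact_mod_cast (show 0 < n by omega)
  have hDpos : 0 < D := by
    by_contra hcon
    nlinarith [mul_nonneg hnpos.le (not_lt.1 hcon |> sub_nonneg.2)]
  obtain ⟨α, hα⟩ : ∃ α, α = n * D / N := ⟨_, rfl⟩
  have hα2 : 1 / 2 ≤ α := by rw [hα, le_div_iff₀ hNpos]; linarith
  have hcard : Fintype.card {S : Finset (Fin n) // S.card = l} = n.choose l := by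
    simp
  obtain ⟨S₀, hS₀⟩ : ∃ S : Finset (Fin n), S.card = l := by
    obtain ⟨S, -, hS⟩ := exists_subset_card_eq (s := (univ : Finset (Fin n))) (n := l)
      (by simp; omega)
    exact ⟨S, hS⟩
  have : Nonempty {S : Finset (Fin n) // S.card = l} := ⟨⟨S₀, hS₀⟩⟩
  set d : Fin k → {S : Finset (Fin n) // S.card = l} → ℝ :=
    fun i S => ∑ C ∈ H i, if (S.1 ∩ C).card = m then (1 : ℝ) else 0 with hd
  obtain ⟨t, ht⟩ : ∃ t, t = 4 * (1 + α) := ⟨_, rfl⟩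
  have htpos : 0 < t := by rw [ht]; linarith
  have hrow : ∀ i (S : {S : Finset (Fin n) // S.card = l}),
      ∑ T : {S : Finset (Fin n) // S.card = l},
        (if symmDiff S.1 T.1 ∈ H i then (1 : ℝ) else 0) = d i S :=
    fun i S => kikuchi_row_sum (H i) l m (hH i).1 S
  have h := correlated_signs_le (k := k) (Ω := {S : Finset (Fin n) // S.card = l})
    (fun i => Matrix.of fun S T => if d i S ≤ t ∧ d i T ≤ t then
      (if symmDiff S.1 T.1 ∈ H i then 1 else 0) else 0) t ε (δ * α / 2) (l * Real.log n)
    (fun i S T => by simp only [Matrix.of_apply]; split_ifs <;> norm_num)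
    (fun i S => by
      simp only [Matrix.of_apply]
      by_cases hS : d i S ≤ t
      · refine le_trans (le_trans (sum_le_sum fun T _ => ?_) (hrow i S).le) hS
        split_ifs <;> norm_num
      · simp [hS, htpos.le])
    (fun i => by
      ext S T
      simp only [Matrix.transpose_apply, Matrix.of_apply, symmDiff_comm, and_comm])
    htpos hε (by positivity)
    (by
      have h1 : (1 : ℝ) ≤ l := by exact_mod_cast hm.trans hml
      have h2 : 1 ≤ Real.log n := by
        rw [Real.le_log_iff_exp_le hnpos]
        have : (16 : ℝ) ≤ n := by exact_mod_cast hn16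
        linarith [Real.exp_one_lt_d9]
      nlinarith)
    (by
      rw [hcard, ← Real.log_pow]
      refine Real.log_le_log hNpos ?_
      exact_mod_cast Nat.choose_le_pow n l)
    (fun i => by
      simp only [Matrix.of_apply]
      obtain ⟨m1, m2⟩ := kikuchi_moments (H i) l m (hH i) hm hml hln hn D hD (d i) fun S => rfl
      have hHn : ((H i).card : ℝ) * 2 ≤ n := by
        have h1 := card_mul_le_of_isMatching (H i) (hH i)
        have h2 : (H i).card * 2 ≤ (H i).card * (2 * m) := Nat.mul_le_mul_left _ (by omega)
        exact_mod_cast h2.trans h1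
      refine le_trans ?_ (mass_truncation
        (fun S T : {S : Finset (Fin n) // S.card = l} => if symmDiff S.1 T.1 ∈ H i then 1 else 0)
        (d i) t htpos (fun S T => by split_ifs <;> norm_num) (fun S T => by rw [symmDiff_comm])
        (hrow i) ?_)
      · rw [m1, hcard, hα]
        have : δ * (n * D / N) / 2 * N = δ * n * D / 2 := by field_simp
        rw [← hN, this]
        have := mul_le_mul_of_nonneg_right (hsize i) hDpos.le
        linarith
      · refine m2.trans ?_
        rw [m1, ht, hα, ← hN]
        have e : ((H i).card : ℝ) ^ 2 * (2 * D ^ 2 / N) =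
            ((H i).card * 2) * ((H i).card * D * (D / N)) := by ring
        have e2 : 4 * (1 + n * D / N) / 4 * ((H i).card * D) =
            (H i).card * D + n * ((H i).card * D * (D / N)) := by ring
        rw [e, e2]
        gcongr)
    (fun b S => ∏ v ∈ S.1, pmo (Enc b v)) (fun b S => prod_pmo_sq _ _)
    (fun i S T hST => by
      simp only [Matrix.of_apply] at hST
      have hST' : symmDiff S.1 T.1 ∈ H i := by
        by_contra hne; simp [hne] at hST
      simp only [prod_pmo_mul_prod_pmo]
      exact correlation_of_agreement (fun b => pmo (b i)) _ ε (fun b => pmo_sq _)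
        (fun b => prod_pmo_sq _ _) (hdec i _ hST'))
  refine h.trans ?_
  have hlog : 0 ≤ (l : ℝ) * Real.log n :=
    mul_nonneg (Nat.cast_nonneg l) (Real.log_natCast_nonneg n)
  have ht12 : t ≤ 12 * α := by rw [ht]; linarith
  calc 400 * t ^ 2 * (l * Real.log n) / (ε ^ 2 * (δ * α / 2) ^ 2)
      ≤ 400 * (12 * α) ^ 2 * (l * Real.log n) / (ε ^ 2 * (δ * α / 2) ^ 2) := by gcongr
    _ = _ := by
      have : α ≠ 0 := by positivity
      field_simp
      ring

/-- **Known LDC lower bound, even `q`.** There is an absolute constant `c > 0` such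
that for every even `q ≥ 2`, `n ≥ 2`, and every `(q, δ, ε)`-normally decodable code
`Enc : {-1,1}^k → {-1,1}^n`, we have `k ≤ c · n^{1 - 2/q} · (log n) / (ε² δ²)`. -/
theorem even_q_ldc_lower_bound :
    ∃ c : ℝ, 0 < c ∧
      ∀ (q k n : ℕ) (δ ε : ℝ) (Enc : (Fin k → Bool) → Fin n → Bool),
        2 ≤ q → Even q → 2 ≤ n → 0 < δ → 0 < ε →
        NormallyDecodable q k n δ ε Enc →
        (k : ℝ) ≤ c * (n : ℝ) ^ (1 - 2 / (q : ℝ)) * Real.log n / (ε ^ 2 * δ ^ 2) := by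
  refine ⟨460800, by norm_num, ?_⟩
  rintro q k n δ ε Enc hq2 hqe hn2 hδ hε ⟨H, hH, hsize, hdec⟩
  obtain ⟨m, rfl⟩ : ∃ m, q = 2 * m := hqe.two_dvd
  have hm : 1 ≤ m := by omega
  have hmR : (1 : ℝ) ≤ m := by exact_mod_cast hm
  have hn0 : (0 : ℝ) < n := by exact_mod_cast (show 0 < n by omega)
  have hlog2 : Real.log 2 ≤ Real.log n :=
    Real.log_le_log (by norm_num) (by exact_mod_cast hn2)
  have hlog : 0.69 ≤ Real.log n := by linarith [Real.log_two_gt_d9]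
  rcases Nat.eq_zero_or_pos k with rfl | hk
  · rw [Nat.cast_zero]; positivity
  obtain ⟨y, hy⟩ : ∃ y : ℝ, y = (n : ℝ) ^ (1 / (m : ℝ)) := ⟨_, rfl⟩
  have hypos : 0 < y := by rw [hy]; positivity
  have hyn : y ^ m = n := by
    rw [hy, ← Real.rpow_natCast, ← Real.rpow_mul hn0.le, one_div, inv_mul_cancel₀ (by positivity),
      Real.rpow_one]
  have hexp : (n : ℝ) ^ (1 - 2 / ((2 * m : ℕ) : ℝ)) = n / y := by
    rw [hy, Real.rpow_sub hn0, Real.rpow_one]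
    congr 2
    push_cast
    field_simp
  rw [hexp]
  have hδm : δ * (2 * m) ≤ 1 := by
    have h1 : ((H ⟨0, hk⟩).card : ℝ) * (2 * m) ≤ n := by
      exact_mod_cast card_mul_le_of_isMatching _ (hH ⟨0, hk⟩)
    have h2 := mul_le_mul_of_nonneg_right (hsize ⟨0, hk⟩) (show (0 : ℝ) ≤ 2 * m by positivity)
    refine le_of_mul_le_mul_right ?_ hn0
    linarith
  by_cases hcase : y < 16 * m
  · have hne : ∀ i, ∃ C, C ∈ H i := by
      intro i
      have h1 := lt_of_lt_of_le (mul_pos hδ hn0) (hsize i)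
      exact card_pos.1 (by exact_mod_cast h1)
    choose C hC using hne
    refine (bound_of_one_edge k n ε hε (by omega) Enc C fun i => hdec i _ (hC i)).trans ?_
    rw [div_le_div_iff₀ (by positivity) (by positivity)]
    have hδ2 : δ ^ 2 * y ≤ 4 := by
      have h1 : δ ^ 2 * y ≤ δ ^ 2 * (16 * m) := by gcongr
      have h2 : (δ * (2 * m)) ^ 2 ≤ 1 := pow_le_one₀ (by positivity) hδm
      nlinarith [mul_le_mul_of_nonneg_left hmR (show 0 ≤ δ ^ 2 * m by positivity)]
    have key : 400 * δ ^ 2 * y ≤ 460800 * Real.log n := by nlinarith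
    have : 400 * δ ^ 2 ≤ 460800 * Real.log n / y := by rwa [le_div_iff₀ hypos]
    calc 400 * n * (ε ^ 2 * δ ^ 2) = (400 * δ ^ 2) * (n * ε ^ 2) := by ring
      _ ≤ (460800 * Real.log n / y) * (n * ε ^ 2) := by gcongr
      _ = _ := by ring
  · rw [not_lt] at hcase
    have hy1 : 1 ≤ y := by linarith
    have hny : n / y = y ^ (m - 1) := by
      rw [← hyn, div_eq_iff hypos.ne', ← pow_succ, Nat.sub_add_cancel hm]
    have hmny : (m : ℝ) ≤ n / y := by
      rw [hny]
      have h1 : m ≤ 2 ^ (m - 1) := by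
        have := Nat.lt_two_pow_self (n := m - 1); omega
      calc (m : ℝ) ≤ 2 ^ (m - 1) := by exact_mod_cast h1
        _ ≤ y ^ (m - 1) := pow_le_pow_left₀ (by norm_num) (by linarith) _
    obtain ⟨l, hl⟩ : ∃ l, l = ⌈(n : ℝ) / y⌉₊ := ⟨_, rfl⟩
    have hl1 : (n : ℝ) / y ≤ l := by rw [hl]; exact Nat.le_ceil _
    have hl2 : (l : ℝ) ≤ 2 * (n / y) := by
      have := Nat.ceil_lt_add_one (show 0 ≤ (n : ℝ) / y by positivity)
      rw [← hl] at this
      linarith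
    have hml : m ≤ l := by exact_mod_cast hmny.trans hl1
    have hnym : 16 * m * (n / y) ≤ (n : ℝ) := by
      rw [← mul_div_assoc, div_le_iff₀ hypos, mul_comm (n : ℝ)]
      gcongr
    have hlmR : 2 * (m : ℝ) * (l + m) ≤ n := by nlinarith
    have hlm : 2 * m * (l + m) ≤ n := by exact_mod_cast hlmR
    have hn16 : 16 * m ^ 2 ≤ n := by
      have : (16 : ℝ) * m ^ 2 ≤ n := by nlinarith
      exact_mod_cast this
    have hln : l + 2 * m ≤ n := by nlinarith
    have hfin := kikuchi_bound k n l m δ ε Enc H hδ hε hm hml hln hn16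
      (single_count_ge n l m y hm hml hypos hyn hl1 hlm) hH hsize hdec
    refine hfin.trans ?_
    refine div_le_div_of_nonneg_right ?_ (by positivity)
    calc 230400 * (l * Real.log n) ≤ 230400 * (2 * (n / y) * Real.log n) := by gcongr
      _ = _ := by ring
end
end

section
/- There is an absolute constant c > 0 such that the following holds. Let q ≥ 3 be an odd integer, let n ≥ 2, and let C : {-1,1}^k → {-1,1}^n be a (q, δ, ε)-normally decodable code. Then k ≤ c · n^{1 - 2/(q+1)} · (log n) / (ε^2 · δ^2). -/
open Finset
open scoped Classical

noncomputable section

lemma pmo_mul_self (b : Bool) : pmo b * pmo b = 1 := by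
  cases b <;> norm_num [pmo]

/-! ### Moments of signed sums of matrices -/

/-- The signed combination `∑ i, b i • A i`. -/
def signedSum {k : ℕ} {V : Type*} (A : Fin k → Matrix V V ℝ) (b : Fin k → Bool) :
    Matrix V V ℝ :=
  ∑ i, pmo (b i) • A i

lemma sum_prod_pmo_pow_nonneg {k : ℕ} (e : Fin k → ℕ) :
    0 ≤ ∑ b : Fin k → Bool, ∏ i, pmo (b i) ^ e i := by
  have h := Fintype.prod_sum (fun (i : Fin k) (c : Bool) => pmo c ^ e i)
  rw [← h]
  refine Finset.prod_nonneg fun i _ => ?_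
  rcases Nat.even_or_odd (e i) with he | he <;>
    simp [pmo, he.neg_one_pow]

/-- Each monomial coefficient of the `p`-th power of a signed sum of matrices is dominated by the
corresponding coefficient of the `p`-th power of the scalar signed sum. -/
lemma sum_abs_sum_signedSum_pow_le {k : ℕ} {V : Type*} [Fintype V] [DecidableEq V]
    (A : Fin k → Matrix V V ℝ) {d : ℝ} (hA : ∀ i u, ∑ v, |A i u v| ≤ d) (p : ℕ)
    (e : Fin k → ℕ) (u : V) :
    ∑ v, |∑ b : Fin k → Bool, (∏ i, pmo (b i) ^ e i) * (signedSum A b ^ p) u v| ≤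
      d ^ p * ∑ b : Fin k → Bool, (∏ i, pmo (b i) ^ e i) * (∑ i, pmo (b i)) ^ p := by
  induction p generalizing e u with
  | zero =>
    have h : ∀ v, |∑ b : Fin k → Bool, (∏ i, pmo (b i) ^ e i) * (signedSum A b ^ 0) u v| =
        if u = v then ∑ b : Fin k → Bool, ∏ i, pmo (b i) ^ e i else 0 := by
      intro v
      by_cases huv : u = v
      · simp [huv, abs_of_nonneg (sum_prod_pmo_pow_nonneg e)]
      · simp [huv]
    simp only [h]
    simp
  | succ p ih =>
    let bump : Fin k → Fin k → ℕ := fun i => e + Pi.single i 1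
    have key : ∀ (i : Fin k) (b : Fin k → Bool),
        (∏ j, pmo (b j) ^ e j) * pmo (b i) = ∏ j, pmo (b j) ^ bump i j := by
      intro i b
      simp only [bump, Pi.add_apply, pow_add, Finset.prod_mul_distrib]
      congr 1
      rw [Finset.prod_eq_single i]
      · simp
      · intro j _ hj
        simp [hj]
      · simp
    have hexp : ∀ v, ∑ b : Fin k → Bool, (∏ i, pmo (b i) ^ e i) * (signedSum A b ^ (p + 1)) u v =
        ∑ i, ∑ w, A i u w * ∑ b : Fin k → Bool,
          (∏ j, pmo (b j) ^ bump i j) * (signedSum A b ^ p) w v := by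
      intro v
      have h1 : ∀ b : Fin k → Bool, (signedSum A b ^ (p + 1)) u v =
          ∑ i, ∑ w, pmo (b i) * A i u w * (signedSum A b ^ p) w v := by
        intro b
        rw [pow_succ', Matrix.mul_apply, Finset.sum_comm]
        refine Finset.sum_congr rfl fun w _ => ?_
        rw [← Finset.sum_mul]
        congr 1
        simp [signedSum, Matrix.sum_apply]
      simp only [h1, Finset.mul_sum]
      rw [Finset.sum_comm]
      refine Finset.sum_congr rfl fun i _ => ?_
      rw [Finset.sum_comm]
      refine Finset.sum_congr rfl fun w _ => ?_
      refine Finset.sum_congr rfl fun b _ => ?_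
      rw [← key]
      ring
    have hscal : ∑ b : Fin k → Bool, (∏ i, pmo (b i) ^ e i) * (∑ i, pmo (b i)) ^ (p + 1) =
        ∑ i, ∑ b : Fin k → Bool,
          (∏ j, pmo (b j) ^ bump i j) * (∑ i, pmo (b i)) ^ p := by
      rw [Finset.sum_comm]
      refine Finset.sum_congr rfl fun b _ => ?_
      rw [pow_succ', ← mul_assoc, Finset.mul_sum, Finset.sum_mul]
      exact Finset.sum_congr rfl fun i _ => by rw [key]
    simp only [hexp]
    rw [hscal, Finset.mul_sum]
    calc ∑ v, |∑ i, ∑ w, A i u w * ∑ b : Fin k → Bool,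
          (∏ j, pmo (b j) ^ bump i j) * (signedSum A b ^ p) w v|
        ≤ ∑ v, ∑ i, ∑ w, |A i u w| * |∑ b : Fin k → Bool,
          (∏ j, pmo (b j) ^ bump i j) * (signedSum A b ^ p) w v| := by
          refine Finset.sum_le_sum fun v _ => ?_
          refine (Finset.abs_sum_le_sum_abs _ _).trans (Finset.sum_le_sum fun i _ => ?_)
          refine (Finset.abs_sum_le_sum_abs _ _).trans (Finset.sum_le_sum fun w _ => ?_)
          rw [abs_mul]
      _ = ∑ i, ∑ w, |A i u w| * ∑ v, |∑ b : Fin k → Bool,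
          (∏ j, pmo (b j) ^ bump i j) * (signedSum A b ^ p) w v| := by
          rw [Finset.sum_comm]
          refine Finset.sum_congr rfl fun i _ => ?_
          rw [Finset.sum_comm]
          exact Finset.sum_congr rfl fun w _ => (Finset.mul_sum _ _ _).symm
      _ ≤ _ := by
          refine Finset.sum_le_sum fun i _ => ?_
          set M := ∑ b : Fin k → Bool,
            (∏ j, pmo (b j) ^ bump i j) * (∑ i, pmo (b i)) ^ p with hM
          have hMn : 0 ≤ d ^ p * M :=
            (Finset.sum_nonneg fun v _ => abs_nonneg _).trans (ih (bump i) u)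
          calc _ ≤ ∑ w, |A i u w| * (d ^ p * M) :=
                Finset.sum_le_sum fun w _ =>
                  mul_le_mul_of_nonneg_left (ih (bump i) w) (abs_nonneg _)
            _ ≤ d * (d ^ p * M) := by
                rw [← Finset.sum_mul]
                exact mul_le_mul_of_nonneg_right (hA i u) hMn
            _ = d ^ (p + 1) * M := by ring

lemma sum_trace_signedSum_pow_le {k : ℕ} {V : Type*} [Fintype V] [DecidableEq V]
    (A : Fin k → Matrix V V ℝ) {d : ℝ} (hA : ∀ i u, ∑ v, |A i u v| ≤ d) (p : ℕ) :
    ∑ b : Fin k → Bool, (signedSum A b ^ p).trace ≤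
      Fintype.card V * (d ^ p * ∑ b : Fin k → Bool, (∑ i, pmo (b i)) ^ p) := by
  have h : ∀ u, ∑ b : Fin k → Bool, (signedSum A b ^ p) u u ≤
      d ^ p * ∑ b : Fin k → Bool, (∑ i, pmo (b i)) ^ p := by
    intro u
    have h0 := sum_abs_sum_signedSum_pow_le A hA p 0 u
    simp only [Pi.zero_apply, pow_zero, Finset.prod_const_one, one_mul] at h0
    exact (le_abs_self _).trans ((Finset.single_le_sum
      (f := fun v => |∑ b : Fin k → Bool, (signedSum A b ^ p) u v|)
      (fun v _ => abs_nonneg _) (Finset.mem_univ u)).trans h0)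
  simp only [Matrix.trace, Matrix.diag_apply]
  rw [Finset.sum_comm]
  refine (Finset.sum_le_sum fun u _ => h u).trans ?_
  simp

/-- Khintchine-type bound for the even moments of a Rademacher sum. -/
lemma sum_sum_pmo_pow_le {k : ℕ} (hk : 0 < k) {m : ℕ} (hm : 0 < m) :
    ∑ b : Fin k → Bool, (∑ i, pmo (b i)) ^ (2 * m) ≤
      2 ^ k * (2 * (2 * m * Real.exp 1 * k) ^ m) := by
  have hk' : (0 : ℝ) < k := by exact_mod_cast hk
  have hm' : (0 : ℝ) < m := by exact_mod_cast hm
  set t : ℝ := √(2 * m / k) with ht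
  have htpos : 0 < t := Real.sqrt_pos.mpr (by positivity)
  have htsq : t ^ 2 = 2 * m / k := Real.sq_sqrt (by positivity)
  have hmgf : ∀ s : ℝ, s ^ 2 = 2 * m / k →
      ∑ b : Fin k → Bool, Real.exp (s * ∑ i, pmo (b i)) ≤ 2 ^ k * Real.exp m := by
    intro s hs
    have h1 : ∑ b : Fin k → Bool, Real.exp (s * ∑ i, pmo (b i)) = (2 * Real.cosh s) ^ k := by
      have h := Fintype.prod_sum (fun (_ : Fin k) (c : Bool) => Real.exp (s * pmo c))
      have h2 : ∀ b : Fin k → Bool, Real.exp (s * ∑ i, pmo (b i)) =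
          ∏ i, Real.exp (s * pmo (b i)) := by
        intro b
        rw [Finset.mul_sum, Real.exp_sum]
      simp only [h2]
      rw [← h]
      simp only [Fintype.sum_bool, pmo, Finset.prod_const, Finset.card_univ, Fintype.card_fin,
        Real.cosh_eq]
      congr 1
      simp
      ring
    rw [h1, mul_pow]
    refine mul_le_mul_of_nonneg_left ?_ (by positivity)
    calc Real.cosh s ^ k ≤ Real.exp (s ^ 2 / 2) ^ k :=
          pow_le_pow_left₀ (Real.cosh_pos s).le (Real.cosh_le_exp_half_sq s) k
      _ = Real.exp m := by
          rw [← Real.exp_nat_mul, hs]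
          congr 1
          field_simp
  have hpt : ∀ x : ℝ, x ^ (2 * m) ≤
      ((2 * m) ^ (2 * m) / t ^ (2 * m)) * (Real.exp (t * x) + Real.exp (-t * x)) := by
    intro x
    have h1 := Real.pow_div_factorial_le_exp |t * x| (abs_nonneg _) (2 * m)
    have h2 : Real.exp |t * x| ≤ Real.exp (t * x) + Real.exp (-t * x) := by
      rcases abs_cases (t * x) with ⟨h, _⟩ | ⟨h, _⟩ <;> rw [h]
      · linarith [Real.exp_pos (-t * x)]
      · rw [neg_mul]
        linarith [Real.exp_pos (t * x)]
    have h3 : ((2 * m).factorial : ℝ) ≤ (2 * m) ^ (2 * m) := by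
      exact_mod_cast Nat.factorial_le_pow (2 * m)
    rw [div_le_iff₀ (by positivity), Even.pow_abs (even_two_mul m)] at h1
    rw [div_mul_eq_mul_div, le_div_iff₀ (by positivity), ← mul_pow, mul_comm x t]
    calc (t * x) ^ (2 * m) ≤ Real.exp |t * x| * ((2 * m).factorial : ℝ) := h1
      _ ≤ (Real.exp (t * x) + Real.exp (-t * x)) * (2 * m) ^ (2 * m) := by gcongr
      _ = _ := by ring
  calc ∑ b : Fin k → Bool, (∑ i, pmo (b i)) ^ (2 * m)
      ≤ ∑ b : Fin k → Bool, ((2 * m) ^ (2 * m) / t ^ (2 * m)) *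
        (Real.exp (t * ∑ i, pmo (b i)) + Real.exp (-t * ∑ i, pmo (b i))) :=
        Finset.sum_le_sum fun b _ => hpt _
    _ = ((2 * m) ^ (2 * m) / t ^ (2 * m)) *
        (∑ b : Fin k → Bool, Real.exp (t * ∑ i, pmo (b i)) +
          ∑ b : Fin k → Bool, Real.exp (-t * ∑ i, pmo (b i))) := by
        rw [← Finset.mul_sum, Finset.sum_add_distrib]
    _ ≤ ((2 * m) ^ (2 * m) / t ^ (2 * m)) * (2 ^ k * Real.exp m + 2 ^ k * Real.exp m) := by
        gcongr
        · exact hmgf t htsq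
        · exact hmgf (-t) (by rw [neg_sq, htsq])
    _ = 2 ^ k * (2 * (2 * m * Real.exp 1 * k) ^ m) := by
        rw [pow_mul t, htsq, pow_mul (2 * (m : ℝ)), ← div_pow, mul_pow _ (k : ℝ),
          mul_pow _ (Real.exp 1), ← Real.exp_nat_mul]
        have : (2 * (m : ℝ)) ^ 2 / (2 * m / k) = 2 * m * k := by
          field_simp
        rw [this, mul_one, mul_pow]
        ring

lemma dotProduct_mulVec_sq_le {V : Type*} [Fintype V] {M : Matrix V V ℝ}
    (hM : M.IsSymm) {x : V → ℝ} (hx : x ⬝ᵥ x ≤ 1) :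
    (x ⬝ᵥ M.mulVec x) ^ 2 ≤ x ⬝ᵥ (M * M).mulVec x := by
  have h1 : x ⬝ᵥ (M * M).mulVec x = M.mulVec x ⬝ᵥ M.mulVec x := by
    rw [← Matrix.mulVec_mulVec, Matrix.dotProduct_mulVec, ← Matrix.mulVec_transpose, hM.eq]
  rw [h1]
  have h2 : (x ⬝ᵥ M.mulVec x) ^ 2 ≤ (x ⬝ᵥ x) * (M.mulVec x ⬝ᵥ M.mulVec x) := by
    simpa only [dotProduct, ← sq] using
      Finset.sum_mul_sq_le_sq_mul_sq Finset.univ x (M.mulVec x)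
  have h3 : 0 ≤ M.mulVec x ⬝ᵥ M.mulVec x :=
    Finset.sum_nonneg fun i _ => mul_self_nonneg _
  nlinarith

lemma abs_dotProduct_mulVec_pow_le {V : Type*} [Fintype V] [DecidableEq V] {M : Matrix V V ℝ}
    (hM : M.IsSymm) {x : V → ℝ} (hx : x ⬝ᵥ x ≤ 1) (j : ℕ) :
    |x ⬝ᵥ M.mulVec x| ^ 2 ^ j ≤ |x ⬝ᵥ (M ^ 2 ^ j).mulVec x| := by
  induction j with
  | zero => simp
  | succ j ih =>
    have hs : (M ^ 2 ^ j).IsSymm := hM.pow _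
    calc |x ⬝ᵥ M.mulVec x| ^ 2 ^ (j + 1) = (|x ⬝ᵥ M.mulVec x| ^ 2 ^ j) ^ 2 := by
          rw [← pow_mul, pow_succ]
      _ ≤ |x ⬝ᵥ (M ^ 2 ^ j).mulVec x| ^ 2 := pow_le_pow_left₀ (by positivity) ih 2
      _ = (x ⬝ᵥ (M ^ 2 ^ j).mulVec x) ^ 2 := sq_abs _
      _ ≤ _ := dotProduct_mulVec_sq_le hs hx
      _ = x ⬝ᵥ (M ^ 2 ^ (j + 1)).mulVec x := by rw [← pow_add, pow_succ, mul_two]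
      _ ≤ _ := le_abs_self _

lemma dotProduct_mulVec_sq_le_trace {V : Type*} [Fintype V] {M : Matrix V V ℝ}
    (hM : M.IsSymm) {x : V → ℝ} (hx : x ⬝ᵥ x ≤ 1) :
    (x ⬝ᵥ M.mulVec x) ^ 2 ≤ (M * M).trace := by
  have h1 : x ⬝ᵥ M.mulVec x = ∑ p : V × V, M p.1 p.2 * (x p.1 * x p.2) := by
    simp only [dotProduct, Matrix.mulVec, Fintype.sum_prod_type, Finset.mul_sum]
    exact Finset.sum_congr rfl fun i _ => Finset.sum_congr rfl fun j _ => by ring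
  have h2 : (M * M).trace = ∑ p : V × V, M p.1 p.2 ^ 2 := by
    simp only [Matrix.trace, Matrix.diag_apply, Matrix.mul_apply, Fintype.sum_prod_type]
    exact Finset.sum_congr rfl fun i _ => Finset.sum_congr rfl fun j _ => by
      rw [hM.apply i j, sq]
  have h3 : ∑ p : V × V, (x p.1 * x p.2) ^ 2 = (x ⬝ᵥ x) ^ 2 := by
    simp only [dotProduct, Fintype.sum_prod_type, sq, Finset.sum_mul_sum]
    exact Finset.sum_congr rfl fun i _ => Finset.sum_congr rfl fun j _ => by ring
  have h4 := Finset.sum_mul_sq_le_sq_mul_sq Finset.univ (fun p : V × V => M p.1 p.2)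
    (fun p => x p.1 * x p.2)
  rw [h3, ← h1, ← h2] at h4
  have h5 : 0 ≤ (M * M).trace := by
    rw [h2]
    positivity
  have h6 : 0 ≤ x ⬝ᵥ x := Finset.sum_nonneg fun i _ => mul_self_nonneg _
  have h7 : (x ⬝ᵥ x) ^ 2 ≤ 1 := pow_le_one₀ h6 hx
  nlinarith

/-- A quadratic form in a signed sum of `k` matrices with row sums at most `d`, evaluated at unit
vectors that may depend on the signs, is on average `O(d √(k log |V|))`. -/
theorem sq_le_of_le_sum_signedSum {k : ℕ} (hk : 0 < k) {V : Type*} [Fintype V] [DecidableEq V]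
    {A : Fin k → Matrix V V ℝ} (hsymm : ∀ i, (A i).IsSymm) {d : ℝ}
    (hd : 0 ≤ d) (hA : ∀ i u, ∑ v, |A i u v| ≤ d) {x : (Fin k → Bool) → V → ℝ}
    (hx : ∀ b, x b ⬝ᵥ x b ≤ 1) {L : ℝ} (hL : 1 ≤ L)
    (hcard : 2 * (Fintype.card V : ℝ) ≤ Real.exp L) {τ : ℝ} (hτ : 0 ≤ τ)
    (hsum : 2 ^ k * τ ≤ ∑ b, x b ⬝ᵥ (signedSum A b).mulVec (x b)) :
    τ ^ 2 ≤ 4 * Real.exp 1 ^ 2 * L * k * d ^ 2 := by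
  obtain ⟨j, hj1, hj2⟩ := exists_nat_pow_near hL one_lt_two
  set m : ℕ := 2 ^ (j + 1) with hm
  have hmpos : 0 < m := by positivity
  have hmL : L ≤ m := by rw [hm]; push_cast; exact hj2.le
  have hmL2 : (m : ℝ) ≤ 2 * L := by
    rw [hm]; push_cast; rw [pow_succ]; linarith
  have hS : ∀ b, (signedSum A b).IsSymm := by
    intro b
    rw [Matrix.IsSymm, signedSum, Matrix.transpose_sum]
    exact Finset.sum_congr rfl fun i _ => by rw [Matrix.transpose_smul, (hsymm i).eq]
  have hpt : ∀ b, (x b ⬝ᵥ (signedSum A b).mulVec (x b)) ^ (2 * m) ≤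
      (signedSum A b ^ (2 * m)).trace := by
    intro b
    have h1 := abs_dotProduct_mulVec_pow_le (hS b) (hx b) (j + 1)
    rw [← hm] at h1
    calc (x b ⬝ᵥ (signedSum A b).mulVec (x b)) ^ (2 * m)
        = (|x b ⬝ᵥ (signedSum A b).mulVec (x b)| ^ m) ^ 2 := by
          rw [← pow_mul, mul_comm m 2, Even.pow_abs (even_two_mul m)]
      _ ≤ |x b ⬝ᵥ (signedSum A b ^ m).mulVec (x b)| ^ 2 := pow_le_pow_left₀ (by positivity) h1 2
      _ = (x b ⬝ᵥ (signedSum A b ^ m).mulVec (x b)) ^ 2 := sq_abs _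
      _ ≤ _ := dotProduct_mulVec_sq_le_trace ((hS b).pow m) (hx b)
      _ = _ := by rw [← pow_add, two_mul]
  have hjensen : τ ^ (2 * m) ≤
      ((2 : ℝ) ^ k)⁻¹ * ∑ b, (x b ⬝ᵥ (signedSum A b).mulVec (x b)) ^ (2 * m) := by
    have h := Real.pow_arith_mean_le_arith_mean_pow_of_even Finset.univ
      (fun _ : Fin k → Bool => ((2 : ℝ) ^ k)⁻¹)
      (fun b => x b ⬝ᵥ (signedSum A b).mulVec (x b)) (fun _ _ => by positivity) (by simp)
      (even_two_mul m)
    rw [← Finset.mul_sum, ← Finset.mul_sum] at h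
    refine (pow_le_pow_left₀ hτ ?_ _).trans h
    rw [inv_mul_eq_div, le_div_iff₀ (by positivity)]
    linarith
  have hmoment : τ ^ (2 * m) ≤
      (2 * Fintype.card V) * (d ^ (2 * m) * (2 * m * Real.exp 1 * k) ^ m) := by
    calc τ ^ (2 * m) ≤ _ := hjensen
      _ ≤ ((2 : ℝ) ^ k)⁻¹ * ∑ b, (signedSum A b ^ (2 * m)).trace := by
          gcongr with b _
          exact hpt b
      _ ≤ ((2 : ℝ) ^ k)⁻¹ * (Fintype.card V * (d ^ (2 * m) *
            ∑ b : Fin k → Bool, (∑ i, pmo (b i)) ^ (2 * m))) := by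
          gcongr
          exact sum_trace_signedSum_pow_le A hA (2 * m)
      _ ≤ ((2 : ℝ) ^ k)⁻¹ * (Fintype.card V * (d ^ (2 * m) *
            (2 ^ k * (2 * (2 * m * Real.exp 1 * k) ^ m)))) := by
          gcongr
          exact sum_sum_pmo_pow_le hk hmpos
      _ = _ := by field_simp
  have hpow : (τ ^ 2) ^ m ≤ (Real.exp 1 * (d ^ 2 * (2 * m * Real.exp 1 * k))) ^ m := by
    calc (τ ^ 2) ^ m = τ ^ (2 * m) := (pow_mul _ _ _).symm
      _ ≤ _ := hmoment
      _ ≤ Real.exp m * (d ^ (2 * m) * (2 * m * Real.exp 1 * k) ^ m) := by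
          gcongr
          exact hcard.trans (Real.exp_le_exp.mpr hmL)
      _ = _ := by
          rw [mul_pow (Real.exp 1), mul_pow (d ^ 2), ← pow_mul, ← Real.exp_nat_mul, mul_one]
  have hfin := (pow_le_pow_iff_left₀ (by positivity) (by positivity) hmpos.ne').mp hpow
  calc τ ^ 2 ≤ _ := hfin
    _ = 2 * Real.exp 1 ^ 2 * k * d ^ 2 * m := by ring
    _ ≤ 2 * Real.exp 1 ^ 2 * k * d ^ 2 * (2 * L) := by gcongr
    _ = _ := by ring

/-! ### Binomial estimates -/

lemma choose_add_two_mul (a b : ℕ) :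
    (a + b + 2).choose (a + 1) * ((a + 1) * (b + 1)) =
      (a + b).choose a * ((a + b + 1) * (a + b + 2)) := by
  have h1 := Nat.add_one_mul_choose_eq (a + b + 1) a
  have h2 := Nat.choose_mul_succ_eq (a + b) a
  rw [show a + b + 1 - a = b + 1 by omega] at h2
  calc (a + b + 2).choose (a + 1) * ((a + 1) * (b + 1))
      = ((a + b + 1 + 1).choose (a + 1) * (a + 1)) * (b + 1) := by ring_nf
    _ = (a + b + 2) * ((a + b + 1).choose a * (b + 1)) := by rw [← h1]; ring
    _ = _ := by rw [← h2]; ring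

/-- The ratio between consecutive terms of `t ↦ (a + b + 2 t).choose (a + t)`. -/
lemma choose_add_two_mul_succ (a b t : ℕ) :
    ((a + b + 2 * (t + 1)).choose (a + (t + 1)) : ℝ) =
      (a + b + 2 * t).choose (a + t) *
        (((a + b + 2 * t + 1) * (a + b + 2 * t + 2)) / ((a + t + 1) * (b + t + 1))) := by
  have h := choose_add_two_mul (a + t) (b + t)
  rw [show a + t + (b + t) = a + b + 2 * t by ring] at h
  rw [mul_div_assoc', eq_div_iff (by positivity)]
  exact_mod_cast h

lemma choose_ratio_antitone_step {a b : ℝ} (ha : 1 ≤ a) (hab : 3 * a ≤ b) :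
    ((a + b + 1) * (a + b + 2)) / ((a + 1) * (b + 1)) ≤
      ((a + b - 1) * (a + b)) / (a * b) := by
  rw [div_le_div_iff₀ (by nlinarith) (by nlinarith)]
  have h : 0 ≤ (b - 3 * a) * (3 * b - a) := mul_nonneg (by linarith) (by linarith)
  have hs : 0 ≤ (a + b) * ((a + b - 4) * (a + b)) :=
    mul_nonneg (by linarith) (mul_nonneg (by linarith) (by linarith))
  nlinarith [mul_nonneg h (by linarith : 0 ≤ 4 * (a + b) + 2),
    mul_nonneg (by linarith : 0 ≤ a + b - 4) (by linarith : 0 ≤ a + b)]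

/-- The sequence `t ↦ (a + b + 2 t).choose (a + t)` is log-concave while `a + t` is at most a
quarter of `a + b + 2 t`. -/
lemma choose_mul_choose_le_sq {a b r : ℕ} (hab : 3 * (a + 2 * r) ≤ b + 2 * r) :
    (((a + b).choose a : ℝ)) * (a + b + 4 * r).choose (a + 2 * r) ≤
      ((a + b + 2 * r).choose (a + r) : ℝ) ^ 2 := by
  set g : ℕ → ℝ := fun t => ((a + b + 2 * t).choose (a + t) : ℝ) with hg
  set ρ : ℕ → ℝ := fun t =>
    ((a + b + 2 * t + 1) * (a + b + 2 * t + 2)) / ((a + t + 1) * (b + t + 1)) with hρ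
  have hstep : ∀ t, g (t + 1) = g t * ρ t := fun t => choose_add_two_mul_succ a b t
  have hg0 : ∀ t, 0 ≤ g t := fun t => Nat.cast_nonneg _
  have hρ0 : ∀ t, 0 ≤ ρ t := fun t => by positivity
  have hanti : ∀ t, t + 1 < 2 * r → ρ (t + 1) ≤ ρ t := by
    intro t ht
    have hnat : 3 * (a + t + 1) ≤ b + t + 1 := by omega
    have hA : (1 : ℝ) ≤ a + t + 1 := by
      have : (0 : ℝ) ≤ a + t := by positivity
      linarith
    have h := choose_ratio_antitone_step (a := (a + t + 1 : ℝ)) (b := (b + t + 1 : ℝ)) hA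
      (by exact_mod_cast hnat)
    simp only [hρ]
    push_cast
    convert h using 2 <;> ring
  have hanti' : ∀ j s, j + s < 2 * r → ρ (j + s) ≤ ρ j := by
    intro j s
    induction s with
    | zero => simp
    | succ s ih => exact fun h => (hanti (j + s) (by omega)).trans (ih (by omega))
  have hind : ∀ j ≤ r, g 0 * g (r + j) ≤ g r * g j := by
    intro j
    induction j with
    | zero => simp [mul_comm]
    | succ j ih =>
      intro hj
      rw [← add_assoc, hstep, hstep, ← mul_assoc, ← mul_assoc]
      refine mul_le_mul (ih (by omega)) ?_ (hρ0 _) (mul_nonneg (hg0 _) (hg0 _))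
      rw [add_comm r j]
      exact hanti' j r (by omega)
  have h := hind r le_rfl
  simp only [hg] at h
  rw [sq]
  rwa [show 2 * 0 = 0 from rfl, add_zero, add_zero, show 2 * (r + r) = 4 * r by ring,
    ← two_mul] at h

lemma two_pow_le_centralBinom (r : ℕ) : 2 ^ r ≤ r.centralBinom := by
  induction r with
  | zero => simp
  | succ r ih =>
    have h := Nat.succ_mul_centralBinom_succ r
    rw [pow_succ]
    refine Nat.le_of_mul_le_mul_left ?_ (Nat.succ_pos r)
    rw [h]
    nlinarith

lemma choose_le_mul_centralBinom_mul_choose {a b r : ℕ} (ha : 0 < a) (hab : a ≤ b)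
    (h : (((a + b + 2 * r : ℕ) : ℝ)) ^ r ≤ (a : ℝ) ^ r * ((a + b + 2 * r : ℕ) : ℝ)) :
    ((a + b + 2 * r).choose (a + r) : ℝ) ≤
      ((a + b + 2 * r : ℕ) : ℝ) * (r.centralBinom * (a + b).choose a) := by
  set n : ℕ := a + b + 2 * r with hn
  have ha' : (0 : ℝ) < a := by exact_mod_cast ha
  have hind : ∀ t ≤ r, ((a + b + 2 * t).choose (a + t) : ℝ) ≤
      (2 * n / a) ^ t * (a + b).choose a := by
    intro t
    induction t with
    | zero => simp
    | succ t ih =>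
      intro ht
      rw [choose_add_two_mul_succ, pow_succ, mul_right_comm]
      refine mul_le_mul (ih (by omega)) ?_ (by positivity) (by positivity)
      rw [div_le_div_iff₀ (by positivity) ha']
      have h1 : (a + b + 2 * t + 2 : ℝ) ≤ n := by
        exact_mod_cast (by omega : a + b + 2 * t + 2 ≤ n)
      have h2 : (a + b + 2 * t + 1 : ℝ) ≤ 2 * (b + t + 1) := by
        exact_mod_cast (by omega : a + b + 2 * t + 1 ≤ 2 * (b + t + 1))
      have h3 : (a : ℝ) ≤ a + t + 1 := by
        exact_mod_cast (by omega : a ≤ a + t + 1)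
      calc ((a + b + 2 * t + 1) * (a + b + 2 * t + 2) * a : ℝ)
          ≤ (2 * (b + t + 1)) * n * (a + t + 1) := by gcongr
        _ = _ := by ring
  have hcb : (2 : ℝ) ^ r ≤ r.centralBinom := by
    exact_mod_cast two_pow_le_centralBinom r
  refine (hind r le_rfl).trans ?_
  rw [← mul_assoc]
  refine mul_le_mul_of_nonneg_right ?_ (by positivity)
  calc (2 * n / a : ℝ) ^ r = 2 ^ r * (n ^ r / a ^ r) := by
        rw [div_pow, mul_pow, mul_div_assoc]
    _ ≤ r.centralBinom * n := by
        gcongr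
        rw [div_le_iff₀ (by positivity)]
        linarith
    _ = _ := mul_comm _ _

/-! ### Kikuchi graphs -/

section Kikuchi

variable {α : Type*} [DecidableEq α]

lemma card_filter_inter_sdiff {U C : Finset α} (hC : C ⊆ U) {l r : ℕ} (hr : r ≤ l)
    (P : Finset α → Prop) [DecidablePred P] :
    #{S ∈ powersetCard l U | #(S ∩ C) = r ∧ P (S \ C)} =
      (#C).choose r * #{T ∈ powersetCard (l - r) (U \ C) | P T} := by
  rw [← card_powersetCard, ← card_product]
  refine card_nbij' (fun S => (S ∩ C, S \ C)) (fun p => p.1 ∪ p.2) ?_ ?_ ?_ ?_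
  · intro S hS
    simp only [coe_filter, mem_powersetCard, Set.mem_ofPred_eq] at hS
    obtain ⟨⟨hSU, hSl⟩, hSr, hP⟩ := hS
    have := card_inter_add_card_sdiff S C
    simp only [coe_product, Set.mem_prod, mem_coe, mem_powersetCard, mem_filter]
    exact ⟨⟨inter_subset_right, hSr⟩, ⟨sdiff_subset_sdiff hSU le_rfl, by omega⟩, hP⟩
  · rintro ⟨X, T⟩ h
    simp only [coe_product, Set.mem_prod, mem_coe, mem_powersetCard, mem_filter] at h
    obtain ⟨⟨hX, hXr⟩, ⟨hT, hTl⟩, hP⟩ := h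
    have hTC : Disjoint T C := disjoint_of_subset_left hT sdiff_disjoint
    have hXT : Disjoint X T := disjoint_of_subset_left hX hTC.symm
    have h1 : (X ∪ T) ∩ C = X := by
      rw [union_inter_distrib_right, inter_eq_left.mpr hX, disjoint_iff_inter_eq_empty.mp hTC,
        union_empty]
    have h2 : (X ∪ T) \ C = T := by
      rw [union_sdiff_distrib, sdiff_eq_empty_iff_subset.mpr hX, hTC.sdiff_eq_left, empty_union]
    simp only [coe_filter, mem_powersetCard, Set.mem_ofPred_eq, h1, h2]
    exact ⟨⟨union_subset (hX.trans hC) (hT.trans sdiff_subset),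
      by rw [card_union_of_disjoint hXT]; omega⟩, hXr, hP⟩
  · intro S _
    simp only
    rw [union_comm, sdiff_union_inter]
  · rintro ⟨X, T⟩ h
    simp only [coe_product, Set.mem_prod, mem_coe, mem_powersetCard, mem_filter] at h
    obtain ⟨⟨hX, hXr⟩, ⟨hT, hTl⟩, hP⟩ := h
    have hTC : Disjoint T C := disjoint_of_subset_left hT sdiff_disjoint
    ext1
    · simp only
      rw [union_inter_distrib_right, inter_eq_left.mpr hX, disjoint_iff_inter_eq_empty.mp hTC,
        union_empty]
    · simp only
      rw [union_sdiff_distrib, sdiff_eq_empty_iff_subset.mpr hX, hTC.sdiff_eq_left, empty_union]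

lemma card_symmDiff_of_inter {r : ℕ} {S C : Finset α} (hC : #C = 2 * r) :
    #(symmDiff S C) = #S ↔ #(S ∩ C) = r := by
  have h1 := card_inter_add_card_sdiff S C
  have h2 := card_inter_add_card_sdiff C S
  have h3 : #(symmDiff S C) = #(S \ C) + #(C \ S) := by
    rw [symmDiff_def, sup_eq_union, card_union_of_disjoint disjoint_sdiff_sdiff]
  rw [inter_comm C S] at h2
  omega

/-- The number of hyperedges of `H` that give an edge of the Kikuchi graph at `S`. -/
def kikuchiDegree (r : ℕ) (H : Finset (Finset α)) (S : Finset α) : ℕ :=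
  #{C ∈ H | #(S ∩ C) = r}

/-- The Kikuchi matrix of `H` with weights `w`, restricted to vertices of degree at most `d`. -/
def kikuchi (r : ℕ) (H : Finset (Finset α)) (d : ℝ) (w : Finset α → ℝ) (S T : Finset α) : ℝ :=
  if symmDiff S T ∈ H ∧ (kikuchiDegree r H S : ℝ) ≤ d ∧ (kikuchiDegree r H T : ℝ) ≤ d then
    w (symmDiff S T) else 0

lemma kikuchi_comm (r : ℕ) (H : Finset (Finset α)) (d : ℝ) (w : Finset α → ℝ) (S T : Finset α) :
    kikuchi r H d w S T = kikuchi r H d w T S := by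
  simp only [kikuchi, symmDiff_comm S T, and_comm (a := (kikuchiDegree r H S : ℝ) ≤ d)]

lemma prod_mul_prod_eq_prod_symmDiff {x : α → ℝ} (hx : ∀ v, x v * x v = 1) (S T : Finset α) :
    (∏ v ∈ S, x v) * ∏ v ∈ T, x v = ∏ v ∈ symmDiff S T, x v := by
  have h1 := prod_inter_mul_prod_sdiff S T x
  have h2 := prod_inter_mul_prod_sdiff T S x
  have h3 : (∏ v ∈ S ∩ T, x v) * ∏ v ∈ S ∩ T, x v = 1 := by
    rw [← prod_mul_distrib]
    exact prod_eq_one fun v _ => hx v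
  rw [inter_comm T S] at h2
  rw [symmDiff_def, sup_eq_union, prod_union disjoint_sdiff_sdiff, ← h1, ← h2]
  linear_combination (∏ v ∈ S \ T, x v) * (∏ v ∈ T \ S, x v) * h3

lemma card_le_card_of_pairwise_disjoint {H : Finset (Finset α)} (hne : ∀ C ∈ H, C.Nonempty)
    (hd : Set.Pairwise (H : Set (Finset α)) Disjoint) {U : Finset α} (hU : ∀ C ∈ H, C ⊆ U) :
    #H ≤ #U := by
  calc #H = ∑ C ∈ H, 1 := card_eq_sum_ones H
    _ ≤ ∑ C ∈ H, #C := sum_le_sum fun C hC => card_pos.mpr (hne C hC)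
    _ = #(H.biUnion id) := (card_biUnion hd).symm
    _ ≤ #U := card_le_card (biUnion_subset.mpr hU)

variable [Fintype α]

/-- Sets of size `l` that meet `C` in exactly `r` points. -/
def balanced (l r : ℕ) (C : Finset α) : Finset (Finset α) :=
  {S ∈ powersetCard l univ | #(S ∩ C) = r}

lemma mem_balanced {l r : ℕ} {C S : Finset α} :
    S ∈ balanced l r C ↔ #S = l ∧ #(S ∩ C) = r := by
  simp [balanced]

lemma card_balanced {l r : ℕ} (hr : r ≤ l) {C : Finset α} (hC : #C = 2 * r) :
    #(balanced l r C) = r.centralBinom * (Fintype.card α - 2 * r).choose (l - r) := by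
  have h := card_filter_inter_sdiff (subset_univ C) hr (fun _ => True)
  simp only [and_true, filter_true, card_powersetCard] at h
  rw [balanced, h, hC, ← compl_eq_univ_sdiff, card_compl, hC, Nat.centralBinom_eq_two_mul_choose]

lemma card_balanced_inter_balanced {l r : ℕ} (hr : 2 * r ≤ l) {C C' : Finset α} (hC : #C = 2 * r)
    (hC' : #C' = 2 * r) (hd : Disjoint C C') :
    #(balanced l r C ∩ balanced l r C') =
      r.centralBinom ^ 2 * (Fintype.card α - 4 * r).choose (l - 2 * r) := by
  have h := card_filter_inter_sdiff (subset_univ C) (by omega : r ≤ l) (fun T => #(T ∩ C') = r)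
  have hsub : C' ⊆ univ \ C := by
    rw [← compl_eq_univ_sdiff]
    exact subset_compl_iff_disjoint_left.mpr hd
  have h' := card_filter_inter_sdiff hsub (by omega : r ≤ l - r) (fun _ => True)
  simp only [and_true, filter_true, card_powersetCard] at h'
  have h1 : ∀ S : Finset α, (S \ C) ∩ C' = S ∩ C' := by
    intro S
    rw [inter_comm, ← inter_sdiff_assoc, inter_comm C' S, inter_sdiff_assoc,
      hd.symm.sdiff_eq_left]
  simp only [h1] at h
  rw [h'] at h
  rw [balanced, balanced, ← filter_and, h, hC, hC', card_sdiff_of_subset hsub,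
    ← compl_eq_univ_sdiff, card_compl, hC, hC', Nat.centralBinom_eq_two_mul_choose,
    show Fintype.card α - 2 * r - 2 * r = Fintype.card α - 4 * r by omega,
    show l - r - r = l - 2 * r by omega]
  ring

lemma symmDiff_mem_balanced {l r : ℕ} {S C : Finset α} (hC : #C = 2 * r)
    (hS : S ∈ balanced l r C) : symmDiff S C ∈ balanced l r C := by
  rw [mem_balanced] at hS ⊢
  refine ⟨((card_symmDiff_of_inter hC).mpr hS.2).trans hS.1, ?_⟩
  rw [← card_symmDiff_of_inter hC, symmDiff_symmDiff_cancel_right,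
    (card_symmDiff_of_inter hC).mpr hS.2]

/-- The vertices `S` whose edge `{S, S ∆ C}` joins two vertices of degree at most `d`. -/
def lowDegree (l r : ℕ) (H : Finset (Finset α)) (d : ℝ) (C : Finset α) : Finset (Finset α) :=
  {S ∈ balanced l r C |
    (kikuchiDegree r H S : ℝ) ≤ d ∧ (kikuchiDegree r H (symmDiff S C) : ℝ) ≤ d}

lemma sum_kikuchiDegree (l r : ℕ) (H : Finset (Finset α)) (C : Finset α) :
    ∑ S ∈ balanced l r C, kikuchiDegree r H S =
      ∑ C' ∈ H, #(balanced l r C ∩ balanced l r C') := by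
  simp only [kikuchiDegree, card_filter]
  rw [sum_comm]
  refine sum_congr rfl fun C' _ => ?_
  rw [← card_filter]
  congr 1
  ext S
  simp only [mem_filter, mem_inter, mem_balanced]
  tauto

/-- At least half of the edges contributed by `C` join vertices of low degree. -/
lemma half_le_card_lowDegree {l r : ℕ} {H : Finset (Finset α)} (hH : ∀ C ∈ H, #C = 2 * r)
    {D N n : ℝ} (hN : 0 < N) (hD : 0 < D) (hcard : ∀ C ∈ H, (#(balanced l r C) : ℝ) = D)
    (hpair : ∀ C ∈ H, ∀ C' ∈ H, C ≠ C' →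
      (#(balanced l r C ∩ balanced l r C') : ℝ) * N ≤ D ^ 2)
    (hn : (#H : ℝ) ≤ n) {C : Finset α} (hC : C ∈ H) :
    D / 2 ≤ #(lowDegree l r H (4 * (1 + n * D / N)) C) := by
  set d : ℝ := 4 * (1 + n * D / N) with hd
  have hn0 : 0 ≤ n := (Nat.cast_nonneg _).trans hn
  have hdpos : 0 < d := by positivity
  set bad : Finset (Finset α) := {S ∈ balanced l r C | d < kikuchiDegree r H S} with hbad
  set bad' : Finset (Finset α) :=
    {S ∈ balanced l r C | d < kikuchiDegree r H (symmDiff S C)} with hbad'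
  have hsum : ∑ S ∈ balanced l r C, (kikuchiDegree r H S : ℝ) ≤ D * d / 4 := by
    have h1 : ∑ S ∈ balanced l r C, (kikuchiDegree r H S : ℝ) =
        ∑ C' ∈ H, (#(balanced l r C ∩ balanced l r C') : ℝ) := by
      exact_mod_cast sum_kikuchiDegree l r H C
    rw [h1, ← add_sum_erase _ _ hC, inter_self, hcard C hC]
    have h2 : ∑ C' ∈ H.erase C, (#(balanced l r C ∩ balanced l r C') : ℝ) ≤
        ∑ C' ∈ H.erase C, D ^ 2 / N := by
      refine sum_le_sum fun C' hC' => ?_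
      rw [le_div_iff₀ hN]
      exact hpair C hC C' (mem_of_mem_erase hC') (ne_of_mem_erase hC').symm
    have h3 : ∑ C' ∈ H.erase C, D ^ 2 / N ≤ n * (D ^ 2 / N) := by
      rw [sum_const, nsmul_eq_mul]
      gcongr
      exact (Nat.cast_le.mpr (card_le_card (erase_subset _ _))).trans hn
    have h4 : D * d / 4 = D + n * (D ^ 2 / N) := by
      rw [hd]
      field_simp
    linarith
  have hbadcard : (#bad : ℝ) ≤ D / 4 := by
    have h1 : (#bad : ℝ) * d ≤ ∑ S ∈ balanced l r C, (kikuchiDegree r H S : ℝ) := by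
      calc (#bad : ℝ) * d = ∑ S ∈ bad, d := by rw [sum_const, nsmul_eq_mul]
        _ ≤ ∑ S ∈ bad, (kikuchiDegree r H S : ℝ) :=
            sum_le_sum fun S hS => (mem_filter.mp hS).2.le
        _ ≤ _ := sum_le_sum_of_subset_of_nonneg (filter_subset _ _)
            fun _ _ _ => Nat.cast_nonneg _
    have h2 : (#bad : ℝ) * d ≤ D / 4 * d := by linarith
    exact le_of_mul_le_mul_right h2 hdpos
  have hbadeq : #bad' ≤ #bad := by
    refine card_le_card_of_injOn (fun S => symmDiff S C) ?_ ?_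
    · intro S hS
      have hS' := mem_filter.mp (mem_coe.mp hS)
      exact mem_coe.mpr (mem_filter.mpr ⟨symmDiff_mem_balanced (hH C hC) hS'.1, hS'.2⟩)
    · exact (symmDiff_left_injective C).injOn
  have hcover : balanced l r C ⊆ lowDegree l r H d C ∪ (bad ∪ bad') := by
    intro S hS
    simp only [lowDegree, hbad, hbad', mem_union, mem_filter, hS, true_and]
    by_cases h1 : (kikuchiDegree r H S : ℝ) ≤ d
    · by_cases h2 : (kikuchiDegree r H (symmDiff S C) : ℝ) ≤ d
      · exact Or.inl ⟨h1, h2⟩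
      · exact Or.inr (Or.inr (not_le.mp h2))
    · exact Or.inr (Or.inl (not_le.mp h1))
  have h1 : #(balanced l r C) ≤ #(lowDegree l r H d C) + (#bad + #bad') :=
    (card_le_card hcover).trans ((card_union_le _ _).trans
      (Nat.add_le_add_left (card_union_le _ _) _))
  have h2 : (#(balanced l r C) : ℝ) ≤ #(lowDegree l r H d C) + (#bad + #bad') := by
    exact_mod_cast h1
  have h3 : (#bad' : ℝ) ≤ #bad := by exact_mod_cast hbadeq
  rw [hcard C hC] at h2
  linarith

lemma sum_abs_kikuchi_le {l r : ℕ} {H : Finset (Finset α)} (hH : ∀ C ∈ H, #C = 2 * r) {d : ℝ}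
    (hd : 0 ≤ d) {w : Finset α → ℝ} (hw : ∀ C ∈ H, |w C| ≤ 1) {S : Finset α} (hS : #S = l) :
    ∑ T ∈ powersetCard l univ, |kikuchi r H d w S T| ≤ d := by
  by_cases hdeg : (kikuchiDegree r H S : ℝ) ≤ d
  · refine le_trans ?_ hdeg
    calc ∑ T ∈ powersetCard l univ, |kikuchi r H d w S T|
        ≤ ∑ T ∈ powersetCard l univ, if symmDiff S T ∈ H then (1 : ℝ) else 0 := by
          refine sum_le_sum fun T _ => ?_
          rw [kikuchi]
          split_ifs with h1 h2 h2
          · exact hw _ h1.1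
          · exact absurd h1.1 h2
          · simp
          · simp
      _ = (#{T ∈ powersetCard l univ | symmDiff S T ∈ H} : ℝ) := by
          rw [sum_boole]
      _ ≤ kikuchiDegree r H S := by
          refine Nat.cast_le.mpr (card_le_card_of_injOn (fun T => symmDiff S T) ?_
            (symmDiff_right_injective S).injOn)
          intro T hT
          obtain ⟨hT, hST⟩ := mem_filter.mp (mem_coe.mp hT)
          refine mem_coe.mpr (mem_filter.mpr ⟨hST, ?_⟩)
          rw [← card_symmDiff_of_inter (hH _ hST), symmDiff_symmDiff_cancel_left, hS,
            (mem_powersetCard.mp hT).2]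
  · have : ∀ T, kikuchi r H d w S T = 0 := fun T => if_neg fun h => hdeg h.2.1
    simpa [this] using hd

lemma sum_sum_kikuchi {l r : ℕ} {H : Finset (Finset α)} (hH : ∀ C ∈ H, #C = 2 * r) (d : ℝ)
    (w : Finset α → ℝ) {x : α → ℝ} (hx : ∀ v, x v * x v = 1) :
    ∑ S ∈ powersetCard l univ, ∑ T ∈ powersetCard l univ,
        kikuchi r H d w S T * ((∏ v ∈ S, x v) * ∏ v ∈ T, x v) =
      ∑ C ∈ H, w C * #(lowDegree l r H d C) * ∏ v ∈ C, x v := by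
  have hrow : ∀ S : Finset α, ∑ T ∈ powersetCard l univ,
        kikuchi r H d w S T * ((∏ v ∈ S, x v) * ∏ v ∈ T, x v) =
      ∑ C ∈ H, if symmDiff S C ∈ powersetCard l univ ∧ (kikuchiDegree r H S : ℝ) ≤ d ∧
        (kikuchiDegree r H (symmDiff S C) : ℝ) ≤ d then w C * ∏ v ∈ C, x v else 0 := by
    intro S
    simp only [kikuchi, prod_mul_prod_eq_prod_symmDiff hx, ite_mul, zero_mul]
    rw [← sum_filter, ← sum_filter]
    refine sum_nbij' (fun T => symmDiff S T) (fun C => symmDiff S C) ?_ ?_ ?_ ?_ ?_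
    · intro T hT
      simpa only [mem_filter, symmDiff_symmDiff_cancel_left, and_left_comm] using hT
    · intro C hC
      simpa only [mem_filter, symmDiff_symmDiff_cancel_left, and_left_comm] using hC
    · exact fun T _ => symmDiff_symmDiff_cancel_left S T
    · exact fun C _ => symmDiff_symmDiff_cancel_left S C
    · exact fun T _ => rfl
  simp only [hrow]
  rw [sum_comm]
  refine sum_congr rfl fun C hC => ?_
  have hset : {S ∈ powersetCard l (univ : Finset α) | symmDiff S C ∈ powersetCard l univ ∧
      (kikuchiDegree r H S : ℝ) ≤ d ∧ (kikuchiDegree r H (symmDiff S C) : ℝ) ≤ d} =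
      lowDegree l r H d C := by
    ext S
    simp only [mem_filter, lowDegree, mem_balanced, mem_powersetCard, subset_univ, true_and]
    constructor
    · rintro ⟨h1, h2, h3⟩
      exact ⟨⟨h1, (card_symmDiff_of_inter (hH C hC)).mp (h2.trans h1.symm)⟩, h3⟩
    · rintro ⟨⟨h1, h2⟩, h3⟩
      exact ⟨h1, ((card_symmDiff_of_inter (hH C hC)).mpr h2).trans h1, h3⟩
  rw [← sum_filter, sum_const, nsmul_eq_mul, hset]
  ring

/-- The Kikuchi bound for matchings of even uniformity `2 * r` with spectral parameter
`l = a + r`. -/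
theorem kikuchi_bound_s11 {k r a b : ℕ} (hk : 0 < k) (hr : 0 < r) (hra : r ≤ a)
    (hcardα : Fintype.card α = a + b + 2 * r) (hab : 3 * (a + r) ≤ b + r)
    (hpow : ((Fintype.card α : ℝ)) ^ r ≤ (a : ℝ) ^ r * Fintype.card α)
    {H : Fin k → Finset (Finset α)} (hH : ∀ i, ∀ C ∈ H i, #C = 2 * r)
    (hdisj : ∀ i, Set.Pairwise (H i : Set (Finset α)) Disjoint)
    {h ε : ℝ} (hh : 0 ≤ h) (hε : 0 ≤ ε) (hsize : ∀ i, h ≤ #(H i))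
    {x : (Fin k → Bool) → α → ℝ} (hx : ∀ b v, x b v * x b v = 1)
    (hdec : ∀ i, ∀ C ∈ H i, 2 ^ k * (2 * ε) ≤ ∑ b, pmo (b i) * ∏ v ∈ C, x b v)
    {L : ℝ} (hL : 1 ≤ L)
    (hcard : 2 * ((Fintype.card α).choose (a + r) : ℝ) ≤ Real.exp L) :
    k * (h * ε) ^ 2 ≤ 256 * Real.exp 1 ^ 2 * L * (Fintype.card α : ℝ) ^ 2 := by
  set n : ℝ := (Fintype.card α : ℝ) with hn
  set P : Finset (Finset α) := powersetCard (a + r) univ with hP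
  set N : ℝ := ((Fintype.card α).choose (a + r) : ℝ) with hNdef
  set D : ℝ := (r.centralBinom : ℝ) * (a + b).choose a with hDdef
  have hN : 0 < N := by
    rw [hNdef]
    exact_mod_cast Nat.choose_pos (by omega)
  have hD : 0 < D :=
    mul_pos (by exact_mod_cast r.centralBinom_pos) (by exact_mod_cast Nat.choose_pos (by omega))
  have hNn : N ≤ n * D := by
    have h := choose_le_mul_centralBinom_mul_choose (r := r) (by omega : 0 < a)
      (by omega : a ≤ b) (by rw [← hcardα]; exact hpow)
    rw [← hcardα] at h
    exact h
  have hbal : ∀ i, ∀ C ∈ H i, (#(balanced (a + r) r C) : ℝ) = D := by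
    intro i C hC
    rw [card_balanced (by omega) (hH i C hC), hcardα, Nat.add_sub_cancel, Nat.add_sub_cancel]
    push_cast
    rfl
  have hpair : ∀ i, ∀ C ∈ H i, ∀ C' ∈ H i, C ≠ C' →
      (#(balanced (a + r) r C ∩ balanced (a + r) r C') : ℝ) * N ≤ D ^ 2 := by
    intro i C hC C' hC' hne
    rw [card_balanced_inter_balanced (by omega) (hH i C hC) (hH i C' hC') (hdisj i hC hC' hne)]
    obtain ⟨a', rfl⟩ : ∃ a', a = a' + r := ⟨a - r, by omega⟩
    obtain ⟨b', rfl⟩ : ∃ b', b = b' + r := ⟨b - r, by omega⟩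
    have h := choose_mul_choose_le_sq (a := a') (b := b') (r := r) (by omega)
    rw [hDdef, hNdef, hcardα, show a' + r + (b' + r) + 2 * r - 4 * r = a' + b' by omega,
      show a' + r + r - 2 * r = a' by omega,
      show a' + r + (b' + r) + 2 * r = a' + b' + 4 * r by ring,
      show a' + r + r = a' + 2 * r by ring, show a' + r + (b' + r) = a' + b' + 2 * r by ring,
      mul_pow]
    push_cast
    rw [mul_assoc]
    gcongr
  have hHn : ∀ i, (#(H i) : ℝ) ≤ n := by
    intro i
    rw [hn, ← card_univ]
    exact_mod_cast card_le_card_of_pairwise_disjoint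
      (fun C hC => card_pos.mp (by rw [hH i C hC]; omega)) (hdisj i) (fun C _ => subset_univ C)
  set d : ℝ := 4 * (1 + n * D / N) with hd
  have hd0 : 0 ≤ d := by positivity
  have hlow : ∀ i, ∀ C ∈ H i, D / 2 ≤ #(lowDegree (a + r) r (H i) d C) := fun i C hC =>
    half_le_card_lowDegree (hH i) hN hD (hbal i) (hpair i) (hHn i) hC
  let w : Fin k → Finset α → ℝ := fun i C => (D / 2) / #(lowDegree (a + r) r (H i) d C)
  let A : Fin k → Matrix P P ℝ := fun i => Matrix.of fun S T => kikuchi r (H i) d (w i) S T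
  let y : (Fin k → Bool) → P → ℝ := fun b S => (√N)⁻¹ * ∏ v ∈ (S : Finset α), x b v
  have hsqrt : (√N)⁻¹ * (√N)⁻¹ = N⁻¹ := by
    rw [← mul_inv, Real.mul_self_sqrt hN.le]
  have hPcard : (Fintype.card P : ℝ) = N := by
    rw [Fintype.card_coe, hP, card_powersetCard, card_univ]
  have hcoe : ∀ f : Finset α → ℝ, ∑ S ∈ P, f S = ∑ S : P, f S := fun f => (sum_coe_sort P f).symm
  have hrow : ∀ i u, ∑ v, |A i u v| ≤ d := by
    intro i u
    refine le_trans (le_of_eq ?_) (sum_abs_kikuchi_le (l := a + r) (hH i) hd0 (w := w i) ?_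
      (mem_powersetCard.mp u.2).2)
    · exact (hcoe fun T => |kikuchi r (H i) d (w i) u T|).symm
    · intro C hC
      have := hlow i C hC
      simp only [w]
      rw [abs_of_nonneg (by positivity)]
      exact div_le_one_of_le₀ this (by positivity)
  have hy : ∀ b, y b ⬝ᵥ y b ≤ 1 := by
    intro b
    have h1 : ∀ S : P, y b S * y b S = N⁻¹ := by
      intro S
      simp only [y]
      rw [mul_mul_mul_comm, hsqrt, ← prod_mul_distrib, prod_eq_one fun v _ => hx b v, mul_one]
    simp only [dotProduct, h1, sum_const, nsmul_eq_mul, card_univ, hPcard]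
    rw [mul_inv_cancel₀ hN.ne']
  have hquad : ∀ b i, y b ⬝ᵥ (A i).mulVec (y b) = N⁻¹ * (D / 2) * ∑ C ∈ H i, ∏ v ∈ C, x b v := by
    intro b i
    have h1 : y b ⬝ᵥ (A i).mulVec (y b) = N⁻¹ * ∑ S ∈ P, ∑ T ∈ P,
        kikuchi r (H i) d (w i) S T * ((∏ v ∈ S, x b v) * ∏ v ∈ T, x b v) := by
      simp only [dotProduct, Matrix.mulVec, mul_sum]
      rw [hcoe]
      refine sum_congr rfl fun S _ => ?_
      rw [hcoe]
      refine sum_congr rfl fun T _ => ?_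
      simp only [y, A, Matrix.of_apply]
      rw [← hsqrt]
      ring
    rw [h1, sum_sum_kikuchi (hH i) d (w i) (hx b), mul_assoc, mul_sum (H i) _ (D / 2)]
    congr 1
    refine sum_congr rfl fun C hC => ?_
    have hpos : (0 : ℝ) < #(lowDegree (a + r) r (H i) d C) := lt_of_lt_of_le (by positivity)
      (hlow i C hC)
    simp only [w]
    rw [div_mul_cancel₀ _ hpos.ne']
  have hsum : 2 ^ k * (N⁻¹ * D * (k * (h * ε))) ≤
      ∑ b, y b ⬝ᵥ (signedSum A b).mulVec (y b) := by
    have h1 : ∀ b, y b ⬝ᵥ (signedSum A b).mulVec (y b) =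
        ∑ i, ∑ C ∈ H i, N⁻¹ * (D / 2) * (pmo (b i) * ∏ v ∈ C, x b v) := by
      intro b
      rw [signedSum, Matrix.sum_mulVec, dotProduct_sum]
      refine sum_congr rfl fun i _ => ?_
      rw [Matrix.smul_mulVec, dotProduct_smul, hquad, smul_eq_mul, mul_sum, mul_sum]
      exact sum_congr rfl fun C _ => by ring
    simp only [h1]
    rw [sum_comm]
    calc 2 ^ k * (N⁻¹ * D * (k * (h * ε)))
        = ∑ i : Fin k, h * (N⁻¹ * (D / 2) * (2 ^ k * (2 * ε))) := by
          rw [sum_const, card_univ, Fintype.card_fin, nsmul_eq_mul]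
          ring
      _ ≤ ∑ i : Fin k, ∑ C ∈ H i, N⁻¹ * (D / 2) * (2 ^ k * (2 * ε)) := by
          refine sum_le_sum fun i _ => ?_
          rw [sum_const, nsmul_eq_mul]
          gcongr
          exact hsize i
      _ ≤ _ := by
          refine sum_le_sum fun i _ => ?_
          rw [sum_comm]
          refine sum_le_sum fun C hC => ?_
          rw [← mul_sum]
          gcongr
          exact hdec i C hC
  have hmain := sq_le_of_le_sum_signedSum hk (A := A)
    (fun i => Matrix.IsSymm.ext fun S T => kikuchi_comm r (H i) d (w i) T S) hd0 hrow hy hL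
    (by rw [hPcard]; exact hcard) (by positivity) hsum
  have hd8 : d ≤ 8 * (n * (N⁻¹ * D)) := by
    have : 1 ≤ n * D / N := by rwa [le_div_iff₀ hN, one_mul]
    rw [hd, show n * (N⁻¹ * D) = n * D / N by ring]
    linarith
  set R : ℝ := N⁻¹ * D with hR
  have hRpos : 0 < R := by positivity
  have hk' : (0 : ℝ) < k := by exact_mod_cast hk
  have hfin : (R ^ 2 * k) * (k * (h * ε) ^ 2) ≤
      (R ^ 2 * k) * (256 * Real.exp 1 ^ 2 * L * n ^ 2) := by
    calc (R ^ 2 * k) * (k * (h * ε) ^ 2) = (R * (k * (h * ε))) ^ 2 := by ring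
      _ ≤ 4 * Real.exp 1 ^ 2 * L * k * d ^ 2 := hmain
      _ ≤ 4 * Real.exp 1 ^ 2 * L * k * (8 * (n * R)) ^ 2 := by gcongr
      _ = _ := by ring
  exact le_of_mul_le_mul_left hfin (by positivity)

end Kikuchi

/-! ### The lower bound -/

lemma two_mul_le_sum_pmo_mul_prod {k n : ℕ} {ε : ℝ} {Enc : (Fin k → Bool) → Fin n → Bool}
    {i : Fin k} {C : Finset (Fin n)}
    (h : (1 / 2 + ε : ℝ) ≤ ((Finset.univ.filter (fun b : Fin k → Bool =>
      pmo (b i) = ∏ v ∈ C, pmo (Enc b v))).card : ℝ) / 2 ^ k) :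
    2 ^ k * (2 * ε) ≤ ∑ b, pmo (b i) * ∏ v ∈ C, pmo (Enc b v) := by
  have hprod : ∀ b, (∏ v ∈ C, pmo (Enc b v)) = 1 ∨ (∏ v ∈ C, pmo (Enc b v)) = -1 := by
    intro b
    rw [← mul_self_eq_one_iff, ← prod_mul_distrib]
    exact prod_eq_one fun v _ => pmo_mul_self _
  have hterm : ∀ b, pmo (b i) * ∏ v ∈ C, pmo (Enc b v) =
      2 * (if pmo (b i) = ∏ v ∈ C, pmo (Enc b v) then 1 else 0) - 1 := by
    intro b
    rcases hprod b with hb | hb <;> rw [hb] <;> cases b i <;> norm_num [pmo]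
  rw [le_div_iff₀ (by positivity)] at h
  simp only [hterm]
  rw [sum_sub_distrib, ← mul_sum, sum_boole]
  simp only [sum_const, card_univ, Fintype.card_pi, Fintype.card_bool, prod_const,
    Fintype.card_fin, nsmul_eq_mul, mul_one]
  push_cast
  linarith

lemma exp_one_sq_le : Real.exp 1 ^ 2 ≤ 9 := by
  nlinarith [Real.exp_one_lt_d9, Real.exp_pos 1]

/-- The bound `k = O(n / ε²)`, which only uses one hyperedge per message bit. -/
lemma mul_sq_le_of_normallyDecodable {k n : ℕ} (hk : 0 < k) {ε : ℝ} (hε : 0 < ε)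
    {Enc : (Fin k → Bool) → Fin n → Bool} (C : Fin k → Finset (Fin n))
    (hC : ∀ i, 2 ^ k * (2 * ε) ≤ ∑ b, pmo (b i) * ∏ v ∈ C i, pmo (Enc b v)) :
    k * ε ^ 2 ≤ 9 * (n + 1) := by
  let A : Fin k → Matrix (Fin n → Bool) (Fin n → Bool) ℝ :=
    fun i => Matrix.diagonal fun y => ∏ v ∈ C i, pmo (y v)
  have hone : ∀ (i : Fin k) (y : Fin n → Bool), |∏ v ∈ C i, pmo (y v)| = 1 := by
    intro i y
    rw [abs_prod]
    exact prod_eq_one fun v _ => by cases y v <;> norm_num [pmo]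
  have hmain := sq_le_of_le_sum_signedSum hk (A := A) (d := 1) (L := n + 1) (τ := k * (2 * ε))
    (x := fun b => Pi.single (Enc b) 1)
    (fun i => Matrix.isSymm_diagonal _) zero_le_one ?_ ?_ ?_ ?_ (by positivity) ?_
  · have hk' : (0 : ℝ) < k := by exact_mod_cast hk
    have h1 : (4 * k : ℝ) * (k * ε ^ 2) ≤ 4 * k * (9 * (n + 1)) := by
      calc (4 * k : ℝ) * (k * ε ^ 2) = (k * (2 * ε)) ^ 2 := by ring
        _ ≤ 4 * Real.exp 1 ^ 2 * (n + 1) * k * 1 ^ 2 := hmain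
        _ ≤ 4 * 9 * (n + 1) * k * 1 ^ 2 := by gcongr; exact exp_one_sq_le
        _ = _ := by ring
    exact le_of_mul_le_mul_left h1 (by positivity)
  · intro i u
    rw [sum_eq_single u]
    · simp [A, hone]
    · intro v _ hv
      simp [A, Matrix.diagonal_apply_ne _ hv.symm]
    · simp
  · intro b
    simp
  · have : (0 : ℝ) ≤ n := by positivity
    linarith
  · have h2 : (2 : ℝ) ≤ Real.exp 1 := by linarith [Real.exp_one_gt_d9]
    calc 2 * ((Fintype.card (Fin n → Bool) : ℕ) : ℝ) = 2 ^ (n + 1) := by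
          simp [pow_succ, mul_comm]
      _ ≤ Real.exp 1 ^ (n + 1) := by gcongr
      _ = Real.exp (n + 1) := by
          rw [← Real.exp_nat_mul]
          push_cast
          rw [mul_one]
  · have h1 : ∀ b : Fin k → Bool, (Pi.single (Enc b) (1 : ℝ)) ⬝ᵥ
        (signedSum A b).mulVec (Pi.single (Enc b) 1) =
        ∑ i, pmo (b i) * ∏ v ∈ C i, pmo (Enc b v) := by
      intro b
      simp [signedSum, Matrix.sum_apply, A]
    simp only [h1]
    rw [sum_comm]
    calc (2 : ℝ) ^ k * (k * (2 * ε)) = ∑ i : Fin k, 2 ^ k * (2 * ε) := by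
          rw [sum_const, card_univ, Fintype.card_fin, nsmul_eq_mul]
          ring
      _ ≤ _ := sum_le_sum fun i _ => hC i

/-- Numerical properties of the spectral parameter in the regime `16 ^ r ≤ m`. -/
lemma exists_kikuchi_parameter {r m : ℕ} (hr : 2 ≤ r) (hm : 2 * 16 ^ r ≤ m) :
    ∃ a b : ℕ, r ≤ a ∧ m = a + b + 2 * r ∧ 3 * (a + r) ≤ b + r ∧
      (m : ℝ) ^ r ≤ (a : ℝ) ^ r * m ∧
      (a + r + 1 : ℝ) ≤ 2 * (m : ℝ) ^ (1 - 1 / (r : ℝ)) := by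
  set X : ℝ := (m : ℝ) ^ (1 - 1 / (r : ℝ)) with hX
  have hr0 : (0 : ℝ) < r := by positivity
  have hr2 : (2 : ℝ) ≤ r := by exact_mod_cast hr
  have h16 : (16 : ℝ) ^ r ≤ m := by
    exact_mod_cast (by omega : 16 ^ r ≤ m)
  have hmpos : (0 : ℝ) < m := lt_of_lt_of_le (by positivity) h16
  have hm1 : (1 : ℝ) ≤ m := le_trans (one_le_pow₀ (by norm_num)) h16
  have hXlow : (4 : ℝ) ^ r ≤ X := by
    calc (4 : ℝ) ^ r = √(16 ^ r) := by
          rw [show (16 : ℝ) = 4 ^ 2 by norm_num, ← pow_mul, mul_comm, pow_mul,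
            Real.sqrt_sq (by positivity)]
      _ ≤ √m := Real.sqrt_le_sqrt h16
      _ = (m : ℝ) ^ (1 / 2 : ℝ) := Real.sqrt_eq_rpow _
      _ ≤ X := by
          refine Real.rpow_le_rpow_of_exponent_le hm1 ?_
          have : 1 / (r : ℝ) ≤ 1 / 2 := one_div_le_one_div_of_le two_pos hr2
          linarith
  have hXr : X ^ r * m = (m : ℝ) ^ r := by
    rw [hX, ← Real.rpow_natCast, ← Real.rpow_mul hmpos.le, sub_mul, one_mul,
      one_div_mul_cancel hr0.ne', Real.rpow_sub hmpos, Real.rpow_one, Real.rpow_natCast,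
      div_mul_cancel₀ _ hmpos.ne']
  have hXhigh : X * 16 ≤ m := by
    have h1 : (16 : ℝ) ≤ (m : ℝ) ^ (1 / (r : ℝ)) := by
      calc (16 : ℝ) = ((16 : ℝ) ^ r) ^ (1 / (r : ℝ)) := by
            rw [one_div, Real.pow_rpow_inv_natCast (by norm_num) (by omega)]
        _ ≤ _ := Real.rpow_le_rpow (by positivity) h16 (by positivity)
    calc X * 16 ≤ X * (m : ℝ) ^ (1 / (r : ℝ)) := by gcongr
      _ = m := by
          rw [hX, ← Real.rpow_add hmpos, sub_add_cancel, Real.rpow_one]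
  have hr4 : r + 2 ≤ 4 ^ r := by
    have h1 : r + 1 ≤ 2 ^ r := Nat.lt_two_pow_self
    have h2 : (4 : ℕ) ^ r = 2 ^ r * 2 ^ r := by rw [← mul_pow]; norm_num
    nlinarith
  have hr4' : (r + 2 : ℝ) ≤ 4 ^ r := by exact_mod_cast hr4
  have hXceil : (⌈X⌉₊ : ℝ) < X + 1 := Nat.ceil_lt_add_one (by positivity)
  have hXle : X ≤ ⌈X⌉₊ := Nat.le_ceil X
  have hra : r ≤ ⌈X⌉₊ := by
    have : (r : ℝ) ≤ ⌈X⌉₊ := by linarith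
    exact_mod_cast this
  have hsum : 4 * ⌈X⌉₊ + 4 * r ≤ m := by
    have : (4 * ⌈X⌉₊ + 4 * r : ℝ) ≤ m := by linarith
    exact_mod_cast this
  refine ⟨⌈X⌉₊, m - ⌈X⌉₊ - 2 * r, hra, by omega, by omega, ?_, by linarith⟩
  rw [← hXr]
  gcongr

theorem mul_le_of_sixteen_pow_le {r k n : ℕ} {δ ε : ℝ} {Enc : (Fin k → Bool) → Fin n → Bool}
    (hk : 0 < k) (hr : 2 ≤ r) (hn : 16 ^ r ≤ n) (hδ : 0 < δ) (hε : 0 < ε)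
    {H : Fin k → Finset (Finset (Fin n))} (hH : ∀ i, IsMatching (2 * r - 1) (H i))
    (hsize : ∀ i, δ * n ≤ ((H i).card : ℝ))
    (hdec : ∀ i, ∀ C ∈ H i, 2 ^ k * (2 * ε) ≤ ∑ b, pmo (b i) * ∏ v ∈ C, pmo (Enc b v)) :
    k * (ε ^ 2 * δ ^ 2) ≤ 100000 * (n : ℝ) ^ (1 - 1 / (r : ℝ)) * Real.log n := by
  have hr0 : (0 : ℝ) < r := by positivity
  have hn16 : 256 ≤ n := le_trans (by
    calc 256 = 16 ^ 2 := by norm_num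
      _ ≤ 16 ^ r := Nat.pow_le_pow_right (by norm_num) hr) hn
  have hn16' : (256 : ℝ) ≤ n := by exact_mod_cast hn16
  have hnpos : (0 : ℝ) < n := by linarith
  obtain ⟨a, b, hra, hm, hab, hpow, hsmall⟩ := exists_kikuchi_parameter (m := 2 * n) hr (by omega)
  -- each hyperedge is padded by a private copy of one of its own vertices
  have hne : ∀ i, ∀ C ∈ H i, C.Nonempty := fun i C hC =>
    card_pos.mp (by rw [(hH i).1 C hC]; omega)
  let z : Fin n := ⟨0, by omega⟩
  let rep : Finset (Fin n) → Fin n := fun C => if h : C.Nonempty then h.choose else z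
  have hrep : ∀ i, ∀ C ∈ H i, rep C ∈ C := by
    intro i C hC
    simp only [rep, dif_pos (hne i C hC)]
    exact (hne i C hC).choose_spec
  let pad : Finset (Fin n) → Finset (Fin n ⊕ Fin n) := fun C => C.disjSum {rep C}
  have hpad : Function.Injective pad := by
    intro C C' h
    have := congrArg Finset.toLeft h
    simpa [pad] using this
  have hcardα : Fintype.card (Fin n ⊕ Fin n) = 2 * n := by
    simp [two_mul]
  have hlog : 0 < Real.log n := Real.log_pos (by linarith)
  have hlog1 : 1 ≤ Real.log ((2 * n : ℕ) : ℝ) := by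
    rw [Real.le_log_iff_exp_le (by push_cast; linarith)]
    push_cast
    linarith [Real.exp_one_lt_d9]
  have hlog2 : Real.log ((2 * n : ℕ) : ℝ) ≤ 2 * Real.log n := by
    push_cast
    rw [Real.log_mul two_ne_zero hnpos.ne', two_mul]
    gcongr
    linarith
  set L : ℝ := (a + r + 1) * Real.log ((2 * n : ℕ) : ℝ) with hL
  set Y : ℝ := (n : ℝ) ^ (1 - 1 / (r : ℝ)) with hY
  have hexp0 : 0 ≤ 1 - 1 / (r : ℝ) := by
    rw [sub_nonneg, div_le_one hr0]
    exact_mod_cast (by omega : 1 ≤ r)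
  have hYX : ((2 * n : ℕ) : ℝ) ^ (1 - 1 / (r : ℝ)) ≤ 2 * Y := by
    push_cast
    rw [Real.mul_rpow two_pos.le hnpos.le]
    gcongr
    calc (2 : ℝ) ^ (1 - 1 / (r : ℝ)) ≤ 2 ^ (1 : ℝ) := by
          refine Real.rpow_le_rpow_of_exponent_le one_le_two ?_
          have : 0 ≤ 1 / (r : ℝ) := by positivity
          linarith
      _ = 2 := Real.rpow_one 2
  have hLY : L ≤ 8 * Y * Real.log n := by
    calc L ≤ (2 * (2 * Y)) * (2 * Real.log n) := by
          rw [hL]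
          gcongr
          linarith
      _ = _ := by ring
  have hmain := kikuchi_bound_s11 (α := Fin n ⊕ Fin n) hk (by omega) hra (by rw [hcardα, hm]) hab
    (by rw [hcardα]; exact hpow) (H := fun i => (H i).image pad) (h := δ * n) (ε := ε)
    (x := fun b => Sum.elim (fun v => pmo (Enc b v)) (fun _ => 1)) (L := L)
    ?_ ?_ (by positivity) hε.le ?_ ?_ ?_ ?_ ?_
  · rw [hcardα] at hmain
    have h1 : (n ^ 2 : ℝ) * (k * (ε ^ 2 * δ ^ 2)) ≤
        n ^ 2 * (100000 * Y * Real.log n) := by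
      calc (n ^ 2 : ℝ) * (k * (ε ^ 2 * δ ^ 2)) = k * (δ * n * ε) ^ 2 := by ring
        _ ≤ 256 * Real.exp 1 ^ 2 * L * ((2 * n : ℕ) : ℝ) ^ 2 := hmain
        _ ≤ 256 * 9 * (8 * Y * Real.log n) * ((2 * n : ℕ) : ℝ) ^ 2 := by
            gcongr
            exact exp_one_sq_le
        _ = n ^ 2 * (73728 * Y * Real.log n) := by
            push_cast
            ring
        _ ≤ n ^ 2 * (100000 * Y * Real.log n) := by
            gcongr
            norm_num
    exact le_of_mul_le_mul_left h1 (by positivity)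
  · intro i P hP
    obtain ⟨C, hC, rfl⟩ := mem_image.mp hP
    simp only [pad]
    rw [card_disjSum, (hH i).1 C hC, card_singleton]
    omega
  · intro i C₁ hC₁ C₂ hC₂ hne'
    obtain ⟨C, hC, rfl⟩ := mem_image.mp (mem_coe.mp hC₁)
    obtain ⟨C', hC', rfl⟩ := mem_image.mp (mem_coe.mp hC₂)
    have hd : Disjoint C C' := (hH i).2 hC hC' fun h => hne' (h ▸ rfl)
    have hreps : rep C ≠ rep C' := fun h =>
      disjoint_left.mp hd (hrep i C hC) (h ▸ hrep i C' hC')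
    rw [disjoint_left]
    rintro (v | v) hv hv'
    · exact disjoint_left.mp hd (by simpa [pad] using hv) (by simpa [pad] using hv')
    · simp only [pad, inr_mem_disjSum, mem_singleton] at hv hv'
      exact hreps (hv.symm.trans hv')
  · intro i
    rw [card_image_of_injective _ hpad]
    exact hsize i
  · rintro b (v | v)
    · exact pmo_mul_self _
    · simp
  · intro i P hP
    obtain ⟨C, hC, rfl⟩ := mem_image.mp hP
    simpa [pad, prod_disjSum] using hdec i C hC
  · rw [hL]
    have : (1 : ℝ) ≤ a + r + 1 := by
      have : (0 : ℝ) ≤ a + r := by positivity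
      linarith
    nlinarith
  · rw [hcardα]
    have hpos : (0 : ℝ) < ((2 * n : ℕ) : ℝ) := by push_cast; linarith
    calc 2 * ((2 * n).choose (a + r) : ℝ) ≤ ((2 * n : ℕ) : ℝ) * ((2 * n : ℕ) : ℝ) ^ (a + r) := by
          gcongr
          · push_cast
            linarith
          · exact_mod_cast Nat.choose_le_pow (2 * n) (a + r)
      _ = ((2 * n : ℕ) : ℝ) ^ (a + r + 1) := by ring
      _ = Real.exp L := by
          rw [hL, mul_comm (a + r + 1 : ℝ), ← Real.rpow_natCast, Real.rpow_def_of_pos hpos,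
            Nat.cast_add, Nat.cast_add, Nat.cast_one]

theorem mul_le_of_lt_sixteen_pow {r k n : ℕ} {δ ε : ℝ} {Enc : (Fin k → Bool) → Fin n → Bool}
    (hk : 0 < k) (hr : 2 ≤ r) (hn2 : 2 ≤ n) (hn : n < 16 ^ r) (hδ : 0 < δ) (hε : 0 < ε)
    {H : Fin k → Finset (Finset (Fin n))} (hH : ∀ i, IsMatching (2 * r - 1) (H i))
    (hsize : ∀ i, δ * n ≤ ((H i).card : ℝ))
    (hdec : ∀ i, ∀ C ∈ H i, 2 ^ k * (2 * ε) ≤ ∑ b, pmo (b i) * ∏ v ∈ C, pmo (Enc b v)) :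
    k * (ε ^ 2 * δ ^ 2) ≤ 100000 * (n : ℝ) ^ (1 - 1 / (r : ℝ)) * Real.log n := by
  have hn2' : (2 : ℝ) ≤ n := by exact_mod_cast hn2
  have hnpos : (0 : ℝ) < n := by linarith
  have hHne : ∀ i, (H i).Nonempty := by
    intro i
    have h1 : (0 : ℝ) < #(H i) := lt_of_lt_of_le (by positivity) (hsize i)
    exact card_pos.mp (by exact_mod_cast h1)
  choose C hC using hHne
  have hδ1 : δ ≤ 1 := by
    have h1 : #(H ⟨0, hk⟩) ≤ n := by
      simpa using card_le_card_of_pairwise_disjoint (U := univ)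
        (fun C hC => card_pos.mp (by rw [(hH ⟨0, hk⟩).1 C hC]; omega)) (hH ⟨0, hk⟩).2
        (fun C _ => subset_univ C)
    have h2 : (#(H ⟨0, hk⟩) : ℝ) ≤ n := by exact_mod_cast h1
    have h3 : δ * n ≤ 1 * n := by linarith [hsize ⟨0, hk⟩]
    exact le_of_mul_le_mul_right h3 hnpos
  have hmain := mul_sq_le_of_normallyDecodable hk hε C fun i => hdec i (C i) (hC i)
  set Y : ℝ := (n : ℝ) ^ (1 - 1 / (r : ℝ)) with hY
  have hY0 : 0 < Y := by positivity
  have hnY : n ≤ 16 * Y := by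
    have h1 : (n : ℝ) ^ (1 / (r : ℝ)) ≤ 16 := by
      calc (n : ℝ) ^ (1 / (r : ℝ)) ≤ ((16 : ℝ) ^ r) ^ (1 / (r : ℝ)) := by
            refine Real.rpow_le_rpow hnpos.le ?_ (by positivity)
            exact_mod_cast hn.le
        _ = 16 := by rw [one_div, Real.pow_rpow_inv_natCast (by norm_num) (by omega)]
    calc (n : ℝ) = (n : ℝ) ^ (1 / (r : ℝ)) * Y := by
          rw [hY, ← Real.rpow_add hnpos, add_sub_cancel, Real.rpow_one]
      _ ≤ 16 * Y := by gcongr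
  have hlog : 1 / 2 ≤ Real.log n := by
    have h1 : Real.log 2 ≤ Real.log n := Real.log_le_log two_pos hn2'
    linarith [Real.log_two_gt_d9]
  have hkε : k * (ε ^ 2 * δ ^ 2) ≤ k * ε ^ 2 := by
    have : δ ^ 2 ≤ 1 := pow_le_one₀ hδ.le hδ1
    calc k * (ε ^ 2 * δ ^ 2) ≤ k * (ε ^ 2 * 1) := by gcongr
      _ = _ := by rw [mul_one]
  nlinarith [mul_le_mul_of_nonneg_left hlog hY0.le]
/-- **Known LDC lower bound, odd `q`.** There is an absolute constant `c > 0` such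
that for every odd `q ≥ 3`, `n ≥ 2`, and every `(q, δ, ε)`-normally decodable code
`Enc : {-1,1}^k → {-1,1}^n`, we have `k ≤ c · n^{1 - 2/(q+1)} · (log n) / (ε² δ²)`. -/
theorem odd_q_ldc_lower_bound :
    ∃ c : ℝ, 0 < c ∧
      ∀ (q k n : ℕ) (δ ε : ℝ) (Enc : (Fin k → Bool) → Fin n → Bool),
        3 ≤ q → Odd q → 2 ≤ n → 0 < δ → 0 < ε →
        NormallyDecodable q k n δ ε Enc →
        (k : ℝ) ≤ c * (n : ℝ) ^ (1 - 2 / ((q : ℝ) + 1)) * Real.log n / (ε ^ 2 * δ ^ 2) := by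
  refine ⟨100000, by norm_num, ?_⟩
  intro q k n δ ε Enc hq hodd hn hδ hε ⟨H, hH, hsize, hdec⟩
  have hlog : 0 ≤ Real.log n := Real.log_nonneg (by exact_mod_cast (by omega : 1 ≤ n))
  obtain ⟨s, hs⟩ := hodd
  obtain rfl : q = 2 * (s + 1) - 1 := by omega
  have hexp : 1 - 2 / (((2 * (s + 1) - 1 : ℕ) : ℝ) + 1) = 1 - 1 / ((s + 1 : ℕ) : ℝ) := by
    rw [Nat.cast_sub (by omega)]
    push_cast
    field_simp
    ring
  rw [le_div_iff₀ (by positivity), hexp]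
  rcases Nat.eq_zero_or_pos k with rfl | hk
  · rw [Nat.cast_zero, zero_mul]
    positivity
  have hdec' := fun i C hC => two_mul_le_sum_pmo_mul_prod (hdec i C hC)
  rcases le_or_gt (16 ^ (s + 1)) n with hlarge | hsmall
  · exact mul_le_of_sixteen_pow_le hk (by omega) hlarge hδ hε hH hsize hdec'
  · exact mul_le_of_lt_sixteen_pow hk (by omega) hn hsmall hδ hε hH hsize hdec'
end
end
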